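/- arXiv:2604.26863 — 9 statements merged into one kernel-verified Lean document; each statement's English description precedes it below -/
import Mathlib

section
/- For every z = (z^h, z^c) in D(A), the operator A is dissipative up to boundary terms: Re ⟨z, Az⟩ ≤ −(u₁/2)·|z^h(1)|² − (u₂/2)·|z^c(0)|² + |M|₂·‖z‖², where ⟨·,·⟩ is the L² inner product on [0,1] and ‖·‖ the L² norm. -/
open MeasureTheory intervalIntegral

/-- A function `f : ℝ → ℂ` is `H¹` on `[0,1]` with derivative `f'`. -/
def IsH1 (f f' : ℝ → ℂ) : Prop :=
  ContinuousOn f (Set.Icc 0 1) ∧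
  IntervalIntegrable f' volume 0 1 ∧
  IntervalIntegrable (fun x => ‖f' x‖ ^ 2) volume 0 1 ∧
  ∀ x ∈ Set.Icc (0:ℝ) 1, f x = f 0 + ∫ t in (0:ℝ)..x, f' t

/-- The spectral (operator) norm of the coupling matrix `M = [[−c₁, c₁], [c₂, −c₂]]`. -/
noncomputable def specNormM (c₁ c₂ : ℝ) : ℝ :=
  ‖Matrix.toEuclideanCLM (𝕜 := ℝ) !![-c₁, c₁; c₂, -c₂]‖

lemma aux_real (g : ℝ → ℝ) (a : ℝ) (G : ℝ → ℝ) (hg : IntervalIntegrable g volume 0 1)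
    (hG : ∀ x ∈ Set.Icc (0:ℝ) 1, G x = a + ∫ t in (0:ℝ)..x, g t) :
    ∫ x in (0:ℝ)..1, G x * g x = (G 1 ^ 2 - G 0 ^ 2) / 2 := by
  let K : ℝ → ℝ := fun x => a + ∫ t in (0:ℝ)..x, g t
  have hac0 : AbsolutelyContinuousOnInterval (fun x => ∫ t in (0:ℝ)..x, g t) 0 1 :=
    hg.absolutelyContinuousOnInterval_intervalIntegral (by simp)
  have hacc : AbsolutelyContinuousOnInterval (fun _ : ℝ => a) 0 1 :=
    (contDiff_const.contDiffOn (n := 1)).absolutelyContinuousOnInterval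
  have hK : AbsolutelyContinuousOnInterval K 0 1 := hacc.add hac0
  have h1 := hK.integral_deriv_mul_eq_sub hK
  have h2 : ∫ x in (0:ℝ)..1, (deriv K x * K x + K x * deriv K x)
      = ∫ x in (0:ℝ)..1, 2 * (G x * g x) := by
    apply intervalIntegral.integral_congr_ae
    filter_upwards [hg.ae_hasDerivAt_integral] with x hx hx1
    have hx2 : x ∈ Set.uIcc (0:ℝ) 1 := Set.uIoc_subset_uIcc hx1
    have h3 : HasDerivAt K (g x) x := (hx hx2 0 (by simp)).const_add a
    rw [h3.deriv, hG x (by rwa [Set.uIcc_of_le zero_le_one] at hx2)]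
    simp only [K]
    ring
  rw [h2, intervalIntegral.integral_const_mul] at h1
  rw [hG 1 (by simp), hG 0 (by simp)]
  simp only [K] at h1
  linarith

lemma aux_H1 (f f' : ℝ → ℂ) (h : IsH1 f f') :
    IntervalIntegrable (fun x => (f x).re * (f' x).re + (f x).im * (f' x).im) volume 0 1 ∧
    ∫ x in (0:ℝ)..1, ((f x).re * (f' x).re + (f x).im * (f' x).im)
      = (‖f 1‖ ^ 2 - ‖f 0‖ ^ 2) / 2 := by
  obtain ⟨hc, hi, -, hf⟩ := h
  have hre : IntervalIntegrable (fun x => (f' x).re) volume 0 1 := ⟨hi.1.re, hi.2.re⟩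
  have him : IntervalIntegrable (fun x => (f' x).im) volume 0 1 := ⟨hi.1.im, hi.2.im⟩
  have hii : ∀ x ∈ Set.Icc (0:ℝ) 1, IntervalIntegrable f' volume 0 x := fun x hx =>
    hi.mono_set (by
      rw [Set.uIcc_of_le hx.1, Set.uIcc_of_le zero_le_one]
      exact Set.Icc_subset_Icc_right hx.2)
  have e1 := aux_real (fun x => (f' x).re) (f 0).re (fun x => (f x).re) hre (fun x hx => by
    have := Complex.reCLM.intervalIntegral_comp_comm (hii x hx)
    simp only [Complex.reCLM_apply] at this
    rw [this, hf x hx, Complex.add_re])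
  have e2 := aux_real (fun x => (f' x).im) (f 0).im (fun x => (f x).im) him (fun x hx => by
    have := Complex.imCLM.intervalIntegral_comp_comm (hii x hx)
    simp only [Complex.imCLM_apply] at this
    rw [this, hf x hx, Complex.add_im])
  have hc' : ContinuousOn f (Set.uIcc 0 1) := by rwa [Set.uIcc_of_le zero_le_one]
  have i1 : IntervalIntegrable (fun x => (f x).re * (f' x).re) volume 0 1 :=
    hre.continuousOn_mul (Complex.continuous_re.comp_continuousOn hc')
  have i2 : IntervalIntegrable (fun x => (f x).im * (f' x).im) volume 0 1 :=
    him.continuousOn_mul (Complex.continuous_im.comp_continuousOn hc')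
  refine ⟨i1.add i2, ?_⟩
  rw [intervalIntegral.integral_add i1 i2, e1, e2, Complex.sq_norm, Complex.sq_norm,
    Complex.normSq_apply, Complex.normSq_apply]
  ring

lemma aux_M (c₁ c₂ a b : ℝ) :
    -c₁ * a * (a - b) + c₂ * b * (a - b) ≤ specNormM c₁ c₂ * (a ^ 2 + b ^ 2) := by
  let T := Matrix.toEuclideanCLM (𝕜 := ℝ) !![-c₁, c₁; c₂, -c₂]
  let v : EuclideanSpace ℝ (Fin 2) := !₂[a, b]
  have h1 : inner ℝ v (T v) ≤ ‖v‖ * ‖T v‖ := real_inner_le_norm _ _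
  have h2 : ‖T v‖ ≤ ‖T‖ * ‖v‖ := T.le_opNorm v
  have h3 : ‖v‖ ^ 2 = a ^ 2 + b ^ 2 := by
    simp [v, EuclideanSpace.norm_sq_eq]
  have h4 : inner ℝ v (T v) = -c₁ * a * (a - b) + c₂ * b * (a - b) := by
    simp [v, T, PiLp.inner_apply, Matrix.ofLp_toEuclideanCLM, Matrix.mulVec,
      dotProduct, Fin.sum_univ_two]
    ring
  have h5 : specNormM c₁ c₂ = ‖T‖ := rfl
  rw [h5, ← h3, ← h4]
  nlinarith [norm_nonneg v, mul_le_mul_of_nonneg_left h2 (norm_nonneg v)]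

/-- for `z ∈ D(A)`, the operator `A` is dissipative up to boundary terms:
`Re ⟨z, Az⟩ ≤ −(u₁/2)|z^h(1)|² − (u₂/2)|z^c(0)|² + |M|₂ ‖z‖²`. -/
theorem A_dissipative_up_to_boundary
    (u₁ u₂ c₁ c₂ : ℝ) (hu₁ : 0 < u₁) (hu₂ : 0 < u₂) (hc₁ : 0 < c₁) (hc₂ : 0 < c₂)
    (zh zc zh' zc' : ℝ → ℂ)
    (hzh : IsH1 zh zh') (hzc : IsH1 zc zc')
    (hbc0 : zh 0 = 0) (hbc1 : zc 1 = 0) :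
    (∫ x in (0:ℝ)..1,
        ((starRingEnd ℂ) (zh x) * (-(u₁ : ℂ) * zh' x - (c₁ : ℂ) * (zh x - zc x)) +
          (starRingEnd ℂ) (zc x) * ((u₂ : ℂ) * zc' x + (c₂ : ℂ) * (zh x - zc x)))).re
      ≤ -(u₁ / 2) * ‖zh 1‖ ^ 2 - (u₂ / 2) * ‖zc 0‖ ^ 2
        + specNormM c₁ c₂ * ∫ x in (0:ℝ)..1, (‖zh x‖ ^ 2 + ‖zc x‖ ^ 2) := by
  obtain ⟨ih, eh⟩ := aux_H1 zh zh' hzh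
  obtain ⟨ic, ec⟩ := aux_H1 zc zc' hzc
  obtain ⟨ch, hih, -, -⟩ := hzh
  obtain ⟨cc, hic, -, -⟩ := hzc
  rw [← Set.uIcc_of_le zero_le_one] at ch cc
  have I : IntervalIntegrable (fun x =>
      ((starRingEnd ℂ) (zh x) * (-(u₁ : ℂ) * zh' x - (c₁ : ℂ) * (zh x - zc x)) +
          (starRingEnd ℂ) (zc x) * ((u₂ : ℂ) * zc' x + (c₂ : ℂ) * (zh x - zc x)))) volume 0 1 := by
    have c1 : ContinuousOn (fun x => (starRingEnd ℂ) (zh x)) (Set.uIcc 0 1) :=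
      Complex.continuous_conj.comp_continuousOn ch
    have c2 : ContinuousOn (fun x => (starRingEnd ℂ) (zc x)) (Set.uIcc 0 1) :=
      Complex.continuous_conj.comp_continuousOn cc
    have d1 : IntervalIntegrable (fun x => (c₁ : ℂ) * (zh x - zc x)) volume 0 1 :=
      (continuousOn_const.mul (ch.sub cc)).intervalIntegrable
    have d2 : IntervalIntegrable (fun x => (c₂ : ℂ) * (zh x - zc x)) volume 0 1 :=
      (continuousOn_const.mul (ch.sub cc)).intervalIntegrable
    exact (((hih.const_mul _).sub d1).continuousOn_mul c1).add
      (((hic.const_mul _).add d2).continuousOn_mul c2)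
  have J : IntervalIntegrable (fun x => ‖zh x‖ ^ 2 + ‖zc x‖ ^ 2) volume 0 1 :=
    ((ch.norm.pow 2).add (cc.norm.pow 2)).intervalIntegrable
  have R := Complex.reCLM.intervalIntegral_comp_comm I
  simp only [Complex.reCLM_apply] at R
  rw [← R]
  have key : -(u₁ / 2) * ‖zh 1‖ ^ 2 - (u₂ / 2) * ‖zc 0‖ ^ 2
        + specNormM c₁ c₂ * ∫ x in (0:ℝ)..1, (‖zh x‖ ^ 2 + ‖zc x‖ ^ 2)
      = ∫ x in (0:ℝ)..1,
        ((-u₁) * ((zh x).re * (zh' x).re + (zh x).im * (zh' x).im) +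
          u₂ * ((zc x).re * (zc' x).re + (zc x).im * (zc' x).im) +
          specNormM c₁ c₂ * (‖zh x‖ ^ 2 + ‖zc x‖ ^ 2)) := by
    rw [intervalIntegral.integral_add ((ih.const_mul _).add (ic.const_mul _)) (J.const_mul _),
      intervalIntegral.integral_add (ih.const_mul _) (ic.const_mul _),
      intervalIntegral.integral_const_mul, intervalIntegral.integral_const_mul,
      intervalIntegral.integral_const_mul, eh, ec, hbc0, hbc1, norm_zero]
    ring
  rw [key]
  refine intervalIntegral.integral_mono_on zero_le_one ⟨I.1.re, I.2.re⟩
    (((ih.const_mul _).add (ic.const_mul _)).add (J.const_mul _)) (fun x _ => ?_)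
  have m1 := aux_M c₁ c₂ (zh x).re (zc x).re
  have m2 := aux_M c₁ c₂ (zh x).im (zc x).im
  rw [Complex.sq_norm, Complex.sq_norm, Complex.normSq_apply, Complex.normSq_apply]
  simp only [Complex.add_re, Complex.mul_re, Complex.sub_re, Complex.sub_im, Complex.add_im,
    Complex.mul_im, Complex.neg_re, Complex.neg_im, Complex.conj_re, Complex.conj_im,
    Complex.ofReal_re, Complex.ofReal_im]
  linarith
end

section
/- Let κ = (κ^h, κ^c) ∈ L²([0,1]; ℂ²). There exists λ* > 0 such that for every real λ ≥ λ* the following holds: for every f = (f^h, f^c) ∈ L²([0,1]; ℂ²) there exists a unique z = (z^h, z^c) ∈ D(A) satisfying the resolvent equations λ z^h + u₁ (z^h)' + c₁(z^h − z^c) + z^c(0)·κ^h = f^h and λ z^c − u₂ (z^c)' − c₂(z^h − z^c) + z^c(0)·κ^c = f^c almost everywhere on [0,1]; moreover there exists a constant C_λ ≥ 0, independent of f, such that ‖z‖ ≤ C_λ ‖f‖. (Equivalently: λ belongs to the resolvent set of A − κC and the resolvent is a bounded operator on L²([0,1]; ℂ²).) -/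
open MeasureTheory intervalIntegral

/-- Membership in `L²([0,1]; ℂ)`. -/
def MemL2 (f : ℝ → ℂ) : Prop :=
  AEStronglyMeasurable f (volume.restrict (Set.Icc (0:ℝ) 1)) ∧
  IntervalIntegrable (fun x => ‖f x‖ ^ 2) volume 0 1

/-- `z = (zh, zc)` (with derivatives `zh', zc'`) is a solution in `D(A)` of the
resolvent equations `λ z^h + u₁ (z^h)' + c₁(z^h − z^c) + z^c(0) κ^h = f^h` and
`λ z^c − u₂ (z^c)' − c₂(z^h − z^c) + z^c(0) κ^c = f^c` a.e. on `[0,1]`. -/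
def IsResolventSol (u₁ u₂ c₁ c₂ : ℝ) (κh κc : ℝ → ℂ) (lam : ℝ)
    (fh fc : ℝ → ℂ) (zh zc zh' zc' : ℝ → ℂ) : Prop :=
  IsH1 zh zh' ∧ IsH1 zc zc' ∧ zh 0 = 0 ∧ zc 1 = 0 ∧
  (∀ᵐ x ∂(volume.restrict (Set.Icc (0:ℝ) 1)),
    (lam : ℂ) * zh x + (u₁ : ℂ) * zh' x + (c₁ : ℂ) * (zh x - zc x) + zc 0 * κh x = fh x ∧
    (lam : ℂ) * zc x - (u₂ : ℂ) * zc' x - (c₂ : ℂ) * (zh x - zc x) + zc 0 * κc x = fc x)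


lemma ac_integral {f : ℝ → ℂ} {a b c : ℝ} (h : IntervalIntegrable f volume a b)
    (hc : c ∈ Set.uIcc a b) :
    AbsolutelyContinuousOnInterval (fun x => ∫ v in c..x, f v) a b := by
  have hN := h.norm.absolutelyContinuousOnInterval_intervalIntegral hc
  have key : ∀ x ∈ Set.uIcc a b, ∀ y ∈ Set.uIcc a b,
      dist (∫ v in c..x, f v) (∫ v in c..y, f v) ≤
      dist (∫ v in c..x, ‖f v‖) (∫ v in c..y, ‖f v‖) := by
    intro x hx y hy
    have h1 : ∀ z ∈ Set.uIcc a b, IntervalIntegrable f volume c z := fun z hz =>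
      h.mono_set (Set.uIcc_subset_uIcc hc hz)
    rw [dist_eq_norm, dist_eq_norm, integral_interval_sub_left (h1 x hx) (h1 y hy),
      integral_interval_sub_left (h1 x hx).norm (h1 y hy).norm]
    exact norm_integral_le_abs_integral_norm
  rw [absolutelyContinuousOnInterval_iff] at hN ⊢
  intro ε hε
  obtain ⟨δ, hδ, H⟩ := hN ε hε
  refine ⟨δ, hδ, fun E hE hE2 => lt_of_le_of_lt ?_ (H E hE hE2)⟩
  refine Finset.sum_le_sum fun i hi => ?_
  exact key _ (hE.left i hi).1 _ (hE.left i hi).2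

/-- Solution operator of `y' = -a y + g`, `y p = 0`. -/
noncomputable def TT (p a : ℝ) (g : ℝ → ℂ) (x : ℝ) : ℂ :=
  ((Real.exp (-a * x) : ℝ) : ℂ) * ∫ t in p..x, ((Real.exp (a * t) : ℝ) : ℂ) * g t

lemma hd_exp (a x : ℝ) : HasDerivAt (fun x : ℝ => ((Real.exp (a * x) : ℝ) : ℂ))
    ((Real.exp (a * x) : ℝ) * a : ℂ) x := by
  have : HasDerivAt (fun x : ℝ => Real.exp (a * x)) (Real.exp (a * x) * a) x := by
    simpa using ((hasDerivAt_id x).const_mul a).exp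
  simpa using this.ofReal_comp

lemma ac_exp (a : ℝ) (b c : ℝ) :
    AbsolutelyContinuousOnInterval (fun x : ℝ => ((Real.exp (a * x) : ℝ) : ℂ)) b c := by
  apply ContDiffOn.absolutelyContinuousOnInterval
  apply ContDiff.contDiffOn
  have : ContDiff ℝ 1 (fun x : ℝ => Real.exp (a * x)) := by fun_prop
  exact Complex.ofRealCLM.contDiff.comp this

lemma cont_exp (a : ℝ) : Continuous (fun x : ℝ => ((Real.exp (a * x) : ℝ) : ℂ)) := by fun_prop

lemma ii_exp {g : ℝ → ℂ} (a : ℝ) {b c : ℝ} (hg : IntervalIntegrable g volume b c) :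
    IntervalIntegrable (fun t => ((Real.exp (a * t) : ℝ) : ℂ) * g t) volume b c :=
  hg.continuousOn_mul (cont_exp a).continuousOn

lemma TT_ac {p a : ℝ} {g : ℝ → ℂ} (hp : p ∈ Set.uIcc (0:ℝ) 1)
    (hg : IntervalIntegrable g volume 0 1) :
    AbsolutelyContinuousOnInterval (TT p a g) 0 1 := by
  have := (ac_exp (-a) 0 1).smul (ac_integral (ii_exp a hg) hp)
  exact this

lemma zero_of_ac {Y : ℝ → ℂ} {p : ℝ} (hp : p ∈ Set.uIcc (0:ℝ) 1)
    (h : AbsolutelyContinuousOnInterval Y 0 1)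
    (h0 : ∀ᵐ x, x ∈ Set.uIcc (0:ℝ) 1 → HasDerivAt Y 0 x) (hY : Y p = 0) :
    ∀ x ∈ Set.uIcc (0:ℝ) 1, Y x = 0 := by
  obtain ⟨C, hC⟩ := h.const_of_ae_hasDerivAt_zero h0
  intro x hx
  rw [hC x hx, ← hC p hp, hY]

lemma TT_eq {p a : ℝ} {g : ℝ → ℂ} (hp : p ∈ Set.uIcc (0:ℝ) 1)
    (hg : IntervalIntegrable g volume 0 1) :
    ∀ x ∈ Set.uIcc (0:ℝ) 1, TT p a g x = ∫ t in p..x, (-(a:ℂ) * TT p a g t + g t) := by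
  have hac := TT_ac (a := a) hp hg
  have hi : IntervalIntegrable (fun t => (-(a:ℂ) * TT p a g t + g t)) volume 0 1 :=
    (hac.continuousOn.intervalIntegrable.const_mul _).add hg
  have := zero_of_ac (Y := fun x => TT p a g x - ∫ t in p..x, (-(a:ℂ) * TT p a g t + g t)) hp
    (hac.sub (ac_integral hi hp)) ?_ (by simp [TT])
  · intro x hx
    exact sub_eq_zero.1 (this x hx)
  · filter_upwards [hi.ae_hasDerivAt_integral, (ii_exp a hg).ae_hasDerivAt_integral] with x h1 h2 hx
    have d1 := h1 hx p hp
    have d2 := (hd_exp (-a) x).mul (h2 hx p hp)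
    refine (d2.sub d1).congr_deriv ?_
    have : (((Real.exp (-a * x) : ℝ)) : ℂ) * ((Real.exp (a * x) : ℝ) : ℂ) = 1 := by
      rw [← Complex.ofReal_mul, ← Real.exp_add]; simp
    simp only [TT]
    push_cast at this ⊢
    linear_combination (g x) * this

lemma TT_unique {p a : ℝ} {g y : ℝ → ℂ} (hp : p ∈ Set.uIcc (0:ℝ) 1)
    (hg : IntervalIntegrable g volume 0 1) (hy : ContinuousOn y (Set.uIcc (0:ℝ) 1))
    (h : ∀ x ∈ Set.uIcc (0:ℝ) 1, y x = ∫ t in p..x, (-(a:ℂ) * y t + g t)) :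
    ∀ x ∈ Set.uIcc (0:ℝ) 1, y x = TT p a g x := by
  have hi : IntervalIntegrable (fun t => (-(a:ℂ) * y t + g t)) volume 0 1 :=
    (hy.intervalIntegrable.const_mul _).add hg
  have := zero_of_ac (Y := fun x => ((Real.exp (a * x) : ℝ) : ℂ) *
      (∫ t in p..x, (-(a:ℂ) * y t + g t)) - ∫ t in p..x, ((Real.exp (a * t) : ℝ) : ℂ) * g t) hp
    (((ac_exp a 0 1).smul (ac_integral hi hp)).sub (ac_integral (ii_exp a hg) hp)) ?_ (by simp)
  · intro x hx
    have := this x hx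
    rw [← h x hx, sub_eq_zero] at this
    rw [TT, ← this, ← mul_assoc, ← Complex.ofReal_mul, ← Real.exp_add]
    simp
  · filter_upwards [hi.ae_hasDerivAt_integral, (ii_exp a hg).ae_hasDerivAt_integral] with x h1 h2 hx
    have d1 := (hd_exp a x).mul (h1 hx p hp)
    refine (d1.sub (h2 hx p hp)).congr_deriv ?_
    rw [← h x hx]
    ring

lemma MemL2.memLp {f : ℝ → ℂ} (h : MemL2 f) : MemLp f 2 (volume.restrict (Set.Icc (0:ℝ) 1)) := by
  rw [memLp_two_iff_integrable_sq_norm h.1]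
  have := h.2
  rwa [intervalIntegrable_iff_integrableOn_Icc_of_le zero_le_one] at this

lemma memL2_of_memLp {f : ℝ → ℂ} (h : MemLp f 2 (volume.restrict (Set.Icc (0:ℝ) 1))) : MemL2 f := by
  refine ⟨h.1, ?_⟩
  rw [memLp_two_iff_integrable_sq_norm h.1] at h
  rwa [intervalIntegrable_iff_integrableOn_Icc_of_le zero_le_one]

lemma MemL2.ii {f : ℝ → ℂ} (h : MemL2 f) : IntervalIntegrable f volume 0 1 := by
  rw [intervalIntegrable_iff_integrableOn_Icc_of_le zero_le_one]
  exact h.memLp.integrable (by norm_num)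

lemma MemL2.add {f g : ℝ → ℂ} (hf : MemL2 f) (hg : MemL2 g) : MemL2 (fun x => f x + g x) :=
  memL2_of_memLp (hf.memLp.add hg.memLp)

lemma MemL2.cmul {f : ℝ → ℂ} (hf : MemL2 f) (c : ℂ) : MemL2 (fun x => c * f x) :=
  memL2_of_memLp (hf.memLp.const_mul c)

lemma memL2_of_cont {f : ℝ → ℂ} (hf : ContinuousOn f (Set.Icc 0 1)) : MemL2 f := by
  refine ⟨hf.aestronglyMeasurable measurableSet_Icc, ?_⟩
  apply ContinuousOn.intervalIntegrable
  rw [Set.uIcc_of_le zero_le_one]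
  exact hf.norm.pow 2

noncomputable def nrm (g : ℝ → ℂ) : ℝ := Real.sqrt (∫ x in (0:ℝ)..1, ‖g x‖ ^ 2)

lemma cs_bound {g : ℝ → ℂ} (hg : MemL2 g) {k : ℝ → ℝ} (hk : Continuous k) {s t : ℝ}
    (h0 : 0 ≤ s) (hst : s ≤ t) (h1 : t ≤ 1) :
    ‖∫ x in s..t, (k x : ℂ) * g x‖ ≤ Real.sqrt (∫ x in s..t, k x ^ 2) * nrm g := by
  have hsub : Set.Ioc s t ⊆ Set.Icc 0 1 := fun x hx => ⟨h0.trans hx.1.le, hx.2.trans h1⟩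
  have hle : volume.restrict (Set.Ioc s t) ≤ volume.restrict (Set.Icc (0:ℝ) 1) :=
    Measure.restrict_mono hsub le_rfl
  have hgm : MemLp g 2 (volume.restrict (Set.Ioc s t)) := hg.memLp.mono_measure hle
  have hkm : MemLp (fun x => (k x : ℂ)) 2 (volume.restrict (Set.Ioc s t)) := by
    have : MemL2 (fun x => (k x : ℂ)) := memL2_of_cont (by fun_prop)
    exact this.memLp.mono_measure hle
  have hs := integral_mul_norm_le_Lp_mul_Lq (μ := volume.restrict (Set.Ioc s t))
    (f := fun x => (k x : ℂ)) (g := g) (p := 2) (q := 2) (by constructor <;> norm_num)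
    (by simpa using hkm) (by simpa using hgm)
  simp only [Real.rpow_two, ← Real.sqrt_eq_rpow] at hs
  rw [integral_of_le hst, integral_of_le hst]
  refine (MeasureTheory.norm_integral_le_integral_norm _).trans ?_
  simp only [norm_mul]
  refine hs.trans ?_
  have e1 : (∫ x in Set.Ioc s t, ‖(k x : ℂ)‖ ^ 2) = ∫ x in Set.Ioc s t, k x ^ 2 := by
    simp
  rw [e1]
  gcongr
  unfold nrm
  apply Real.sqrt_le_sqrt
  rw [integral_of_le zero_le_one]
  have := hg.2
  rw [intervalIntegrable_iff_integrableOn_Ioc_of_le zero_le_one] at this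
  have hsub' : Set.Ioc s t ⊆ Set.Ioc 0 1 := fun x hx => ⟨h0.trans_lt hx.1, hx.2.trans h1⟩
  exact setIntegral_mono_set this (Filter.Eventually.of_forall fun x => by positivity)
    hsub'.eventuallyLE

lemma TT_alt (p a : ℝ) (g : ℝ → ℂ) (x : ℝ) :
    TT p a g x = ∫ t in p..x, ((Real.exp (a * (t - x)) : ℝ) : ℂ) * g t := by
  rw [TT, ← intervalIntegral.integral_const_mul]
  congr 1
  ext t
  rw [← mul_assoc, ← Complex.ofReal_mul, ← Real.exp_add]
  congr 3
  ring

lemma int_exp (a x s t : ℝ) (ha : a ≠ 0) : ∫ τ in s..t, Real.exp (a * (τ - x)) ^ 2 =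
    (Real.exp (2 * a * (t - x)) - Real.exp (2 * a * (s - x))) / (2 * a) := by
  have : ∀ τ ∈ Set.uIcc s t, HasDerivAt (fun τ => Real.exp (2 * a * (τ - x)) / (2 * a))
      (Real.exp (a * (τ - x)) ^ 2) τ := by
    intro τ _
    have := ((((hasDerivAt_id τ).sub_const x).const_mul (2 * a)).exp).div_const (2 * a)
    refine this.congr_deriv ?_
    rw [← Real.exp_nat_mul]
    field_simp
    congr 1
    simp only [id]
    push_cast
    ring
  rw [integral_eq_sub_of_hasDerivAt this (Continuous.intervalIntegrable (by fun_prop) _ _)]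
  ring

lemma one_div_sqrt_eq (a : ℝ) : 1 / Real.sqrt a = Real.sqrt (1 / a) := by
  rw [Real.sqrt_div zero_le_one, Real.sqrt_one]

lemma TT_bound0 {a : ℝ} (ha : 0 < a) {g : ℝ → ℂ} (hg : MemL2 g) {x : ℝ}
    (hx : x ∈ Set.Icc (0:ℝ) 1) : ‖TT 0 a g x‖ ≤ 1 / Real.sqrt (2 * a) * nrm g := by
  rw [TT_alt]
  refine (cs_bound hg (k := fun t => Real.exp (a * (t - x))) (by fun_prop) le_rfl hx.1 hx.2).trans ?_
  refine mul_le_mul_of_nonneg_right ?_ (Real.sqrt_nonneg _)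
  rw [int_exp _ _ _ _ ha.ne', one_div_sqrt_eq]
  apply Real.sqrt_le_sqrt
  gcongr
  simp
  positivity

lemma TT_bound1 {a : ℝ} (ha : 0 < a) {g : ℝ → ℂ} (hg : MemL2 g) {x : ℝ}
    (hx : x ∈ Set.Icc (0:ℝ) 1) : ‖TT 1 (-a) g x‖ ≤ 1 / Real.sqrt (2 * a) * nrm g := by
  rw [TT_alt, integral_symm, norm_neg]
  refine (cs_bound hg (k := fun t => Real.exp (-a * (t - x))) (by fun_prop) hx.1 hx.2 le_rfl).trans ?_
  refine mul_le_mul_of_nonneg_right ?_ (Real.sqrt_nonneg _)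
  rw [int_exp _ _ _ _ (neg_ne_zero.2 ha.ne'), one_div_sqrt_eq]
  apply Real.sqrt_le_sqrt
  rw [← neg_div_neg_eq, mul_neg, neg_neg]
  gcongr
  simp
  positivity

lemma TT_lin {p a : ℝ} (hp : p ∈ Set.uIcc (0:ℝ) 1) {f g h : ℝ → ℂ} (hf : MemL2 f) (hg : MemL2 g)
    (hh : MemL2 h) (α β γ : ℂ) {x : ℝ} (hx : x ∈ Set.uIcc (0:ℝ) 1) :
    TT p a (fun t => α * f t + β * g t + γ * h t) x
      = α * TT p a f x + β * TT p a g x + γ * TT p a h x := by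
  have hi : ∀ {f : ℝ → ℂ}, MemL2 f →
      IntervalIntegrable (fun t => ((Real.exp (a * t) : ℝ) : ℂ) * f t) volume p x := fun hf =>
    (ii_exp a hf.ii).mono_set (Set.uIcc_subset_uIcc hp hx)
  have e : ∀ t, ((Real.exp (a * t) : ℝ) : ℂ) * (α * f t + β * g t + γ * h t) =
    α * (((Real.exp (a * t) : ℝ) : ℂ) * f t) + β * (((Real.exp (a * t) : ℝ) : ℂ) * g t)
      + γ * (((Real.exp (a * t) : ℝ) : ℂ) * h t) := fun t => by ring
  unfold TT
  simp only [e]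
  rw [intervalIntegral.integral_add (((hi hf).const_mul _).add ((hi hg).const_mul _))
    ((hi hh).const_mul _), intervalIntegral.integral_add ((hi hf).const_mul _) ((hi hg).const_mul _)]
  simp only [intervalIntegral.integral_const_mul]
  ring

lemma uicc01 : Set.uIcc (0:ℝ) 1 = Set.Icc 0 1 := Set.uIcc_of_le zero_le_one

/-- source term -/
noncomputable def GG (c u : ℝ) (κ f w : ℝ → ℂ) (w0 : ℂ) : ℝ → ℂ := fun t =>
  ((c / u : ℝ) : ℂ) * w t + (-w0 / u) * κ t + (1 / u : ℂ) * f t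

lemma GG_mem {c u : ℝ} {κ f w : ℝ → ℂ} {w0 : ℂ} (hκ : MemL2 κ) (hf : MemL2 f)
    (hw : ContinuousOn w (Set.Icc 0 1)) : MemL2 (GG c u κ f w w0) :=
  (((memL2_of_cont hw).cmul _).add (hκ.cmul _)).add (hf.cmul _)

lemma nrm_nonneg (g : ℝ → ℂ) : 0 ≤ nrm g := Real.sqrt_nonneg _

lemma nrm_le {w : ℝ → ℂ} {D : ℝ} (hD : 0 ≤ D) (hw : ContinuousOn w (Set.Icc 0 1))
    (h : ∀ x ∈ Set.Icc (0:ℝ) 1, ‖w x‖ ≤ D) : nrm w ≤ D := by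
  unfold nrm
  apply Real.sqrt_le_iff.2 ⟨hD, ?_⟩
  have : ∫ x in (0:ℝ)..1, ‖w x‖ ^ 2 ≤ ∫ x in (0:ℝ)..1, D ^ 2 := by
    apply intervalIntegral.integral_mono_on zero_le_one (memL2_of_cont hw).2 (by simp)
    intro x hx
    have := h x hx
    gcongr
  simpa using this

lemma TT_GG_bound {p a B c u : ℝ} (hc : 0 ≤ c) (hB0 : 0 ≤ B) (hp : p ∈ Set.uIcc (0:ℝ) 1)
    (hB : ∀ g, MemL2 g → ∀ x ∈ Set.Icc (0:ℝ) 1, ‖TT p a g x‖ ≤ B * nrm g)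
    {κ f w : ℝ → ℂ} {w0 : ℂ} (hκ : MemL2 κ) (hf : MemL2 f)
    (hw : ContinuousOn w (Set.Icc 0 1)) {D : ℝ} (hD : ∀ x ∈ Set.Icc (0:ℝ) 1, ‖w x‖ ≤ D)
    (hw0 : ‖w0‖ ≤ D) {x : ℝ} (hx : x ∈ Set.Icc (0:ℝ) 1) :
    ‖TT p a (GG c u κ f w w0) x‖ ≤ B * ((c + nrm κ) / |u|) * D + B / |u| * nrm f := by
  unfold GG
  rw [TT_lin hp (memL2_of_cont hw) hκ hf _ _ _ (uicc01 ▸ hx)]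
  have hD0 : 0 ≤ D := (norm_nonneg _).trans hw0
  have h1 := (hB w (memL2_of_cont hw) x hx).trans
    (mul_le_mul_of_nonneg_left (nrm_le hD0 hw hD) hB0)
  have h2 := hB κ hκ x hx
  have h3 := hB f hf x hx
  have hk := nrm_nonneg κ
  have hf := nrm_nonneg f
  calc _ ≤ ‖((c / u : ℝ) : ℂ) * TT p a w x‖ + ‖(-w0 / u) * TT p a κ x‖
        + ‖(1 / u : ℂ) * TT p a f x‖ := norm_add₃_le
    _ = c / |u| * ‖TT p a w x‖ + ‖w0‖ / |u| * ‖TT p a κ x‖ + 1 / |u| * ‖TT p a f x‖ := by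
        simp [abs_of_nonneg hc]
    _ ≤ c / |u| * (B * D) + D / |u| * (B * nrm κ) + 1 / |u| * (B * nrm f) := by gcongr
    _ = _ := by ring

lemma TT_GG_lip {p a B c u : ℝ} (hc : 0 ≤ c) (hB0 : 0 ≤ B) (hp : p ∈ Set.uIcc (0:ℝ) 1)
    (hB : ∀ g, MemL2 g → ∀ x ∈ Set.Icc (0:ℝ) 1, ‖TT p a g x‖ ≤ B * nrm g)
    {κ f w v : ℝ → ℂ} {w0 v0 : ℂ} (hκ : MemL2 κ) (hf : MemL2 f)
    (hw : ContinuousOn w (Set.Icc 0 1)) (hv : ContinuousOn v (Set.Icc 0 1)) {D : ℝ}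
    (hD : ∀ x ∈ Set.Icc (0:ℝ) 1, ‖w x - v x‖ ≤ D)
    (hw0 : ‖w0 - v0‖ ≤ D) {x : ℝ} (hx : x ∈ Set.Icc (0:ℝ) 1) :
    ‖TT p a (GG c u κ f w w0) x - TT p a (GG c u κ f v v0) x‖ ≤ B * ((c + nrm κ) / |u|) * D := by
  have h0 : MemL2 (fun _ => 0) := memL2_of_cont continuousOn_const
  have e : TT p a (GG c u κ f w w0) x - TT p a (GG c u κ f v v0) x =
      TT p a (GG c u κ (fun _ => 0) (fun t => w t - v t) (w0 - v0)) x := by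
    have := TT_lin (a := a) hp (GG_mem (c := c) (u := u) (w0 := w0) hκ hf hw)
      (GG_mem (c := c) (u := u) (w0 := v0) hκ hf hv) h0 1 (-1) 0 (uicc01 ▸ hx)
    have e2 : ∀ r s t : ℂ, r - s = 1 * r + -1 * s + 0 * t := fun r s t => by ring
    rw [e2 _ _ (TT p a (fun _ => 0) x), ← this]
    congr 1
    ext t
    simp only [GG]
    ring
  rw [e]
  refine (TT_GG_bound hc hB0 hp hB hκ h0 (hw.sub hv) hD hw0 hx).trans ?_
  simp [nrm]

lemma fwd {p lam c u : ℝ} (hu : u ≠ 0) (hp : p ∈ Set.uIcc (0:ℝ) 1) {κ f w y y' : ℝ → ℂ} {w0 : ℂ}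
    (hκ : MemL2 κ) (hf : MemL2 f) (hw : ContinuousOn w (Set.Icc 0 1))
    (hy : IsH1 y y') (hyp : y p = 0)
    (he : ∀ᵐ x ∂(volume.restrict (Set.Icc (0:ℝ) 1)),
      (lam : ℂ) * y x + (u : ℂ) * y' x + (c : ℂ) * (y x - w x) + w0 * κ x = f x) :
    ∀ x ∈ Set.Icc (0:ℝ) 1, y x = TT p ((lam + c) / u) (GG c u κ f w w0) x := by
  obtain ⟨h1, h2, h3, h4⟩ := hy
  have huc : (u : ℂ) ≠ 0 := by exact_mod_cast hu
  rw [← uicc01] at h1 h4 ⊢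
  apply TT_unique hp (GG_mem hκ hf hw).ii h1
  intro x hx
  have i1 : ∀ z ∈ Set.uIcc (0:ℝ) 1, IntervalIntegrable y' volume 0 z := fun z hz =>
    h2.mono_set (Set.uIcc_subset_uIcc Set.left_mem_uIcc hz)
  have : y x = ∫ t in p..x, y' t := by
    rw [← integral_interval_sub_left (i1 x hx) (i1 p hp)]
    have e1 := h4 x hx
    have e2 := h4 p hp
    rw [hyp] at e2
    linear_combination e1 - e2
  rw [this]
  apply intervalIntegral.integral_congr_ae
  rw [ae_restrict_iff' measurableSet_Icc] at he
  filter_upwards [he] with t ht htx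
  have htI : t ∈ Set.Icc (0:ℝ) 1 := by
    rw [← uicc01]
    exact Set.uIcc_subset_uIcc hp hx (Set.uIoc_subset_uIcc htx)
  have := ht htI
  simp only [GG]
  push_cast
  field_simp
  linear_combination this

lemma bwd {p lam c u : ℝ} (hu : u ≠ 0) (hp : p ∈ Set.uIcc (0:ℝ) 1) {κ f w y : ℝ → ℂ} {w0 : ℂ}
    (hκ : MemL2 κ) (hf : MemL2 f) (hw : ContinuousOn w (Set.Icc 0 1))
    (hyc : ContinuousOn y (Set.Icc 0 1))
    (hy : ∀ x ∈ Set.Icc (0:ℝ) 1, y x = TT p ((lam + c) / u) (GG c u κ f w w0) x) :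
    ∃ y' : ℝ → ℂ, IsH1 y y' ∧ y p = 0 ∧ ∀ x,
      (lam : ℂ) * y x + (u : ℂ) * y' x + (c : ℂ) * (y x - w x) + w0 * κ x = f x := by
  have huc : (u : ℂ) ≠ 0 := by exact_mod_cast hu
  set a := (lam + c) / u with ha
  have hG := GG_mem (c := c) (u := u) (w0 := w0) hκ hf hw
  have hm : MemL2 (fun x => -(a:ℂ) * y x + GG c u κ f w w0 x) :=
    ((memL2_of_cont hyc).cmul _).add hG
  refine ⟨fun x => -(a:ℂ) * y x + GG c u κ f w w0 x, ⟨hyc, hm.ii, hm.2, ?_⟩, ?_, ?_⟩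
  · have key : ∀ x ∈ Set.Icc (0:ℝ) 1, y x = ∫ t in p..x, (-(a:ℂ) * y t + GG c u κ f w w0 t) := by
      intro x hx
      rw [hy x hx, TT_eq hp hG.ii x (uicc01 ▸ hx)]
      apply intervalIntegral.integral_congr
      intro t ht
      have htI : t ∈ Set.Icc (0:ℝ) 1 := by
        rw [← uicc01]
        exact Set.uIcc_subset_uIcc hp (uicc01 ▸ hx) ht
      simp only [hy t htI]
    intro x hx
    have i1 : ∀ z ∈ Set.Icc (0:ℝ) 1, IntervalIntegrable
        (fun x => -(a:ℂ) * y x + GG c u κ f w w0 x) volume p z := fun z hz =>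
      hm.ii.mono_set (Set.uIcc_subset_uIcc hp (uicc01 ▸ hz))
    have h0 : (0:ℝ) ∈ Set.Icc (0:ℝ) 1 := by simp
    rw [← integral_interval_sub_left (i1 x hx) (i1 0 h0), ← key x hx, ← key 0 h0]
    ring
  · rw [hy p (uicc01 ▸ hp)]
    simp [TT]
  · intro x
    simp only [GG, ha]
    push_cast
    field_simp
    ring

lemma max_attained {p q : ℝ → ℂ} (hp : ContinuousOn p (Set.Icc 0 1))
    (hq : ContinuousOn q (Set.Icc 0 1)) : ∃ D : ℝ,
      (∀ x ∈ Set.Icc (0:ℝ) 1, ‖p x‖ ≤ D ∧ ‖q x‖ ≤ D) ∧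
      ∃ x ∈ Set.Icc (0:ℝ) 1, D = ‖p x‖ ∨ D = ‖q x‖ := by
  obtain ⟨x, hx, h⟩ := isCompact_Icc.exists_isMaxOn (Set.nonempty_Icc.2 (zero_le_one (α := ℝ)))
    (hp.norm.sup hq.norm)
  refine ⟨_, fun y hy => sup_le_iff.1 (h hy), x, hx, ?_⟩
  exact max_choice _ _

lemma exists_fix {p₁ p₂ a₁ a₂ B₁ B₂ c₁ c₂ u₁ u₂ : ℝ} (hc₁ : 0 ≤ c₁) (hc₂ : 0 ≤ c₂)
    (hB₁0 : 0 ≤ B₁) (hB₂0 : 0 ≤ B₂)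
    (hp₁ : p₁ ∈ Set.uIcc (0:ℝ) 1) (hp₂ : p₂ ∈ Set.uIcc (0:ℝ) 1)
    (hB₁ : ∀ g, MemL2 g → ∀ x ∈ Set.Icc (0:ℝ) 1, ‖TT p₁ a₁ g x‖ ≤ B₁ * nrm g)
    (hB₂ : ∀ g, MemL2 g → ∀ x ∈ Set.Icc (0:ℝ) 1, ‖TT p₂ a₂ g x‖ ≤ B₂ * nrm g)
    {κh κc fh fc : ℝ → ℂ} (hκh : MemL2 κh) (hκc : MemL2 κc) (hfh : MemL2 fh) (hfc : MemL2 fc)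
    (hq₁ : B₁ * ((c₁ + nrm κh) / |u₁|) ≤ 1 / 2) (hq₂ : B₂ * ((c₂ + nrm κc) / |u₂|) ≤ 1 / 2) :
    ∃ zh zc : ℝ → ℂ, Continuous zh ∧ Continuous zc ∧
      (∀ x ∈ Set.Icc (0:ℝ) 1, zh x = TT p₁ a₁ (GG c₁ u₁ κh fh zc (zc 0)) x) ∧
      (∀ x ∈ Set.Icc (0:ℝ) 1, zc x = TT p₂ a₂ (GG c₂ u₂ κc fc zh (zc 0)) x) := by
  let X := C(Set.Icc (0:ℝ) 1, ℂ)
  let E : X → ℝ → ℂ := fun z => Set.IccExtend (zero_le_one (α := ℝ)) z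
  have hE : ∀ z : X, Continuous (E z) := fun z => z.continuous.Icc_extend'
  have hEx : ∀ (z : X) (x : Set.Icc (0:ℝ) 1), E z x = z x := fun z x => Set.IccExtend_val _ _ x
  have hEd : ∀ (z w : X) (x : ℝ), ‖E z x - E w x‖ ≤ dist z w := fun z w x => by
    rw [← dist_eq_norm]
    exact ContinuousMap.dist_apply_le_dist _
  have hT : ∀ {p a : ℝ} {g : ℝ → ℂ}, p ∈ Set.uIcc (0:ℝ) 1 → MemL2 g →
      Continuous (fun x : Set.Icc (0:ℝ) 1 => TT p a g x) := fun {p a g} hp hg => by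
    have := (TT_ac (a := a) hp hg.ii).continuousOn
    rw [uicc01] at this
    exact continuousOn_iff_continuous_restrict.1 this
  let Φ : X × X → X × X := fun z =>
    (⟨_, hT (a := a₁) hp₁ (GG_mem (c := c₁) (u := u₁) (w0 := E z.2 0) hκh hfh
        (hE z.2).continuousOn)⟩,
     ⟨_, hT (a := a₂) hp₂ (GG_mem (c := c₂) (u := u₂) (w0 := E z.2 0) hκc hfc
        (hE z.1).continuousOn)⟩)
  have hΦ : ContractingWith (1 / 2) Φ := by
    refine ⟨by rw [← NNReal.coe_lt_coe]; norm_num, LipschitzWith.of_dist_le_mul fun z w => ?_⟩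
    have d1 : dist z.1 w.1 ≤ dist z w := le_max_left _ _
    have d2 : dist z.2 w.2 ≤ dist z w := le_max_right _ _
    have hd : (0:ℝ) ≤ dist z w := dist_nonneg
    have hK : (((1 / 2 : NNReal)) : ℝ) = 1 / 2 := by norm_num
    rw [hK]
    refine max_le ?_ ?_
    · rw [ContinuousMap.dist_le (by positivity)]
      intro x
      rw [dist_eq_norm]
      refine (TT_GG_lip hc₁ hB₁0 hp₁ hB₁ hκh hfh (hE z.2).continuousOn (hE w.2).continuousOn
        (D := dist z w) (fun t _ => (hEd _ _ t).trans d2) ((hEd _ _ 0).trans d2) x.2).trans ?_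
      gcongr
    · rw [ContinuousMap.dist_le (by positivity)]
      intro x
      rw [dist_eq_norm]
      refine (TT_GG_lip hc₂ hB₂0 hp₂ hB₂ hκc hfc (hE z.1).continuousOn (hE w.1).continuousOn
        (D := dist z w) (fun t _ => (hEd _ _ t).trans d1) ((hEd _ _ 0).trans d2) x.2).trans ?_
      gcongr
  have hz : Φ hΦ.fixedPoint = hΦ.fixedPoint := hΦ.fixedPoint_isFixedPt
  generalize hΦ.fixedPoint = z at hz
  refine ⟨E z.1, E z.2, hE _, hE _, fun x hx => ?_, fun x hx => ?_⟩
  · have := congrArg (fun z => z.1 ⟨x, hx⟩) hz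
    rw [hEx z.1 ⟨x, hx⟩]
    exact this.symm
  · have := congrArg (fun z => z.2 ⟨x, hx⟩) hz
    rw [hEx z.2 ⟨x, hx⟩]
    exact this.symm

lemma small_bound {u c m lam : ℝ} (hu : 0 < u) (hc : 0 < c) (hm : 0 < m)
    (h : 2 * m ^ 2 / u ≤ lam) : 1 / Real.sqrt (2 * ((lam + c) / u)) * (m / u) ≤ 1 / 2 := by
  have h1 : 2 * (m / u) ≤ Real.sqrt (2 * ((lam + c) / u)) := by
    apply Real.le_sqrt_of_sq_le
    have e : (2 * (m / u)) ^ 2 = 2 * ((2 * m ^ 2 / u) / u) := by ring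
    rw [e]
    gcongr
    linarith
  have h2 : 0 < Real.sqrt (2 * ((lam + c) / u)) := lt_of_lt_of_le (by positivity) h1
  rw [one_div_mul_eq_div, div_le_iff₀ h2]
  linarith

/-- there exists `λ* > 0` such that every real `λ ≥ λ*` belongs to the
resolvent set of `A − κC`: for every `f ∈ L²` the resolvent equations have a unique
solution `z ∈ D(A)`, with an `L²` bound `‖z‖ ≤ C_λ ‖f‖` uniform in `f`. -/
theorem resolvent_set_nonempty
    (u₁ u₂ c₁ c₂ : ℝ) (hu₁ : 0 < u₁) (hu₂ : 0 < u₂) (hc₁ : 0 < c₁) (hc₂ : 0 < c₂)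
    (κh κc : ℝ → ℂ) (hκh : MemL2 κh) (hκc : MemL2 κc) :
    ∃ lamStar : ℝ, 0 < lamStar ∧ ∀ lam : ℝ, lamStar ≤ lam →
      ∃ C : ℝ, 0 ≤ C ∧
        ∀ fh fc : ℝ → ℂ, MemL2 fh → MemL2 fc →
          (∃ zh zc zh' zc' : ℝ → ℂ,
            IsResolventSol u₁ u₂ c₁ c₂ κh κc lam fh fc zh zc zh' zc' ∧
            (∀ wh wc wh' wc' : ℝ → ℂ,
              IsResolventSol u₁ u₂ c₁ c₂ κh κc lam fh fc wh wc wh' wc' →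
                ∀ x ∈ Set.Icc (0:ℝ) 1, wh x = zh x ∧ wc x = zc x) ∧
            Real.sqrt (∫ x in (0:ℝ)..1, (‖zh x‖ ^ 2 + ‖zc x‖ ^ 2))
              ≤ C * Real.sqrt (∫ x in (0:ℝ)..1, (‖fh x‖ ^ 2 + ‖fc x‖ ^ 2))) := by
  have hk₁ := nrm_nonneg κh
  have hk₂ := nrm_nonneg κc
  refine ⟨1 + 2 * (c₁ + nrm κh) ^ 2 / u₁ + 2 * (c₂ + nrm κc) ^ 2 / u₂, by positivity, ?_⟩
  intro lam hlam
  have t1 : 0 ≤ 2 * (c₁ + nrm κh) ^ 2 / u₁ := by positivity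
  have t2 : 0 ≤ 2 * (c₂ + nrm κc) ^ 2 / u₂ := by positivity
  have hl : 0 < lam := by linarith
  have ha : 0 < (lam + c₁) / u₁ := by positivity
  have hb : 0 < (lam + c₂) / u₂ := by positivity
  have hp₁ : (0:ℝ) ∈ Set.uIcc (0:ℝ) 1 := Set.left_mem_uIcc
  have hp₂ : (1:ℝ) ∈ Set.uIcc (0:ℝ) 1 := Set.right_mem_uIcc
  obtain ⟨B₁, hB₁d⟩ : ∃ B₁, B₁ = 1 / Real.sqrt (2 * ((lam + c₁) / u₁)) := ⟨_, rfl⟩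
  obtain ⟨B₂, hB₂d⟩ : ∃ B₂, B₂ = 1 / Real.sqrt (2 * ((lam + c₂) / u₂)) := ⟨_, rfl⟩
  have hB₁0 : 0 ≤ B₁ := by rw [hB₁d]; positivity
  have hB₂0 : 0 ≤ B₂ := by rw [hB₂d]; positivity
  have hB₁ : ∀ g, MemL2 g → ∀ x ∈ Set.Icc (0:ℝ) 1,
      ‖TT 0 ((lam + c₁) / u₁) g x‖ ≤ B₁ * nrm g := fun g hg x hx => by
    rw [hB₁d]; exact TT_bound0 ha hg hx
  have hB₂ : ∀ g, MemL2 g → ∀ x ∈ Set.Icc (0:ℝ) 1,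
      ‖TT 1 ((lam + c₂) / (-u₂)) g x‖ ≤ B₂ * nrm g := fun g hg x hx => by
    rw [hB₂d, div_neg]; exact TT_bound1 hb hg hx
  have hq₁ : B₁ * ((c₁ + nrm κh) / |u₁|) ≤ 1 / 2 := by
    rw [hB₁d, abs_of_pos hu₁]
    exact small_bound hu₁ hc₁ (by positivity) (by linarith)
  have hq₂ : B₂ * ((c₂ + nrm κc) / |-u₂|) ≤ 1 / 2 := by
    rw [hB₂d, abs_neg, abs_of_pos hu₂]
    exact small_bound hu₂ hc₂ (by positivity) (by linarith)
  have hnu₂ : -u₂ ≠ 0 := neg_ne_zero.2 hu₂.ne'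
  have h0I : (0:ℝ) ∈ Set.Icc (0:ℝ) 1 := by simp
  refine ⟨2 * (2 * (B₁ / |u₁| + B₂ / |-u₂|)), by positivity, ?_⟩
  intro fh fc hfh hfc
  obtain ⟨zh, zc, hzhc, hzcc, hzh, hzc⟩ := exists_fix hc₁.le hc₂.le hB₁0 hB₂0 hp₁ hp₂ hB₁ hB₂
    hκh hκc hfh hfc hq₁ hq₂
  obtain ⟨zh', h1, h1p, h1e⟩ := bwd hu₁.ne' hp₁ hκh hfh hzcc.continuousOn hzhc.continuousOn hzh
  obtain ⟨zc', h2, h2p, h2e⟩ := bwd hnu₂ hp₂ hκc hfc hzhc.continuousOn hzcc.continuousOn hzc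
  refine ⟨zh, zc, zh', zc', ⟨h1, h2, h1p, h2p, ?_⟩, ?_, ?_⟩
  · refine Filter.Eventually.of_forall fun x => ⟨h1e x, ?_⟩
    have := h2e x
    push_cast at this
    linear_combination this
  · rintro wh wc wh' wc' ⟨g1, g2, g1p, g2p, ge⟩
    have w1 := fwd hu₁.ne' hp₁ hκh hfh g2.1 g1 g1p (ge.mono fun x hx => hx.1)
    have w2 := fwd (c := c₂) (lam := lam) hnu₂ hp₂ hκc hfc g1.1 g2 g2p (w0 := wc 0)
      (ge.mono fun x hx => by
        have := hx.2
        push_cast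
        linear_combination this)
    obtain ⟨D, hD, x, hx, hDx⟩ := max_attained (g1.1.sub hzhc.continuousOn)
      (g2.1.sub hzcc.continuousOn)
    simp only [Pi.sub_apply] at hD hDx
    have hD0 : 0 ≤ D := (norm_nonneg _).trans (hD 0 h0I).1
    have b1 := TT_GG_lip (f := fh) hc₁.le hB₁0 hp₁ hB₁ hκh hfh g2.1 hzcc.continuousOn
      (fun t ht => (hD t ht).2) (hD 0 h0I).2 hx (u := u₁)
    have b2 := TT_GG_lip (f := fc) hc₂.le hB₂0 hp₂ hB₂ hκc hfc g1.1 hzhc.continuousOn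
      (fun t ht => (hD t ht).1) (hD 0 h0I).2 hx (u := -u₂)
    rw [← w1 x hx, ← hzh x hx] at b1
    rw [← w2 x hx, ← hzc x hx] at b2
    have m1 := mul_le_mul_of_nonneg_right hq₁ hD0
    have m2 := mul_le_mul_of_nonneg_right hq₂ hD0
    have hDz : D = 0 := by
      rcases hDx with h | h <;> linarith
    intro y hy
    have := hD y hy
    rw [hDz, norm_le_zero_iff, norm_le_zero_iff, sub_eq_zero, sub_eq_zero] at this
    exact this
  · obtain ⟨D, hD, x, hx, hDx⟩ := max_attained hzhc.continuousOn hzcc.continuousOn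
    have hD0 : 0 ≤ D := (norm_nonneg _).trans (hD 0 h0I).1
    have b1 := TT_GG_bound (f := fh) hc₁.le hB₁0 hp₁ hB₁ hκh hfh hzcc.continuousOn
      (fun t ht => (hD t ht).2) (hD 0 h0I).2 hx (u := u₁)
    have b2 := TT_GG_bound (f := fc) hc₂.le hB₂0 hp₂ hB₂ hκc hfc hzhc.continuousOn
      (fun t ht => (hD t ht).1) (hD 0 h0I).2 hx (u := -u₂)
    rw [← hzh x hx] at b1
    rw [← hzc x hx] at b2
    have m1 := mul_le_mul_of_nonneg_right hq₁ hD0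
    have m2 := mul_le_mul_of_nonneg_right hq₂ hD0
    obtain ⟨S, hS⟩ : ∃ S, S = Real.sqrt (∫ x in (0:ℝ)..1, (‖fh x‖ ^ 2 + ‖fc x‖ ^ 2)) := ⟨_, rfl⟩
    have s1 : nrm fh ≤ S := by
      rw [hS]
      refine Real.sqrt_le_sqrt (intervalIntegral.integral_mono_on zero_le_one hfh.2
        (hfh.2.add hfc.2) fun x _ => ?_)
      have : 0 ≤ ‖fc x‖ ^ 2 := by positivity
      linarith
    have s2 : nrm fc ≤ S := by
      rw [hS]
      refine Real.sqrt_le_sqrt (intervalIntegral.integral_mono_on zero_le_one hfc.2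
        (hfh.2.add hfc.2) fun x _ => ?_)
      have : 0 ≤ ‖fh x‖ ^ 2 := by positivity
      linarith
    have r1 : 0 ≤ B₁ / |u₁| := by positivity
    have r2 : 0 ≤ B₂ / |-u₂| := by positivity
    have hS0 : 0 ≤ S := by rw [hS]; positivity
    have n1 := mul_le_mul_of_nonneg_left s1 r1
    have n2 := mul_le_mul_of_nonneg_left s2 r2
    have n3 := mul_nonneg r1 hS0
    have n4 := mul_nonneg r2 hS0
    have hDS : D ≤ 2 * (B₁ / |u₁| + B₂ / |-u₂|) * S := by
      rcases hDx with h | h <;> nlinarith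
    have hI : ∫ x in (0:ℝ)..1, (‖zh x‖ ^ 2 + ‖zc x‖ ^ 2) ≤ ∫ x in (0:ℝ)..1, (2 * D) ^ 2 := by
      refine intervalIntegral.integral_mono_on zero_le_one
        (Continuous.intervalIntegrable (by fun_prop) _ _) (by simp) fun x hx => ?_
      have i1 := pow_le_pow_left₀ (norm_nonneg _) (hD x hx).1 2
      have i2 := pow_le_pow_left₀ (norm_nonneg _) (hD x hx).2 2
      nlinarith [sq_nonneg D]
    rw [← hS]
    calc _ ≤ 2 * D := Real.sqrt_le_iff.2 ⟨by positivity, by simpa using hI⟩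
      _ ≤ _ := by linarith
end

section
/- Fix λ₀ > 0 and let λ ∈ ℂ. If λ is an eigenvalue of the shifted operator A_s = A + λ₀·I, i.e. there exists a nonzero differentiable v = (v^h, v^c) : [0,1] → ℂ² with v^h(0) = 0 and v^c(1) = 0 satisfying −u₁ (v^h)' − c₁(v^h − v^c) = (λ − λ₀) v^h and u₂ (v^c)' + c₂(v^h − v^c) = (λ − λ₀) v^c on [0,1], then f(λ) = 0, where f(λ) := (u₁/c₁)(θ₁(λ) e^{θ₁(λ)} − θ₂(λ) e^{θ₂(λ)}) + ((λ − λ₀ + c₁)/c₁)(e^{θ₁(λ)} − e^{θ₂(λ)}). -/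
open Complex

/-- `θ₁, θ₂` are the two roots (with multiplicity, via Vieta's formulas) of the
characteristic equation `r² + a(λ) r + b(λ) = 0`, where
`a(λ) = ((u₂ − u₁)(λ − lam0) + u₂c₁ − u₁c₂)/(u₁u₂)` and
`b(λ) = −((λ − lam0)² + (λ − lam0)(c₁ + c₂))/(u₁u₂)`. -/
def CharRoots (u₁ u₂ c₁ c₂ lam0 : ℝ) (lam θ₁ θ₂ : ℂ) : Prop :=
  θ₁ + θ₂ = -((((u₂ : ℂ) - u₁) * (lam - (lam0 : ℂ)) + (u₂ : ℂ) * c₁ - (u₁ : ℂ) * c₂)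
      / ((u₁ : ℂ) * u₂)) ∧
  θ₁ * θ₂ = -(((lam - (lam0 : ℂ)) ^ 2 + (lam - (lam0 : ℂ)) * ((c₁ : ℂ) + c₂))
      / ((u₁ : ℂ) * u₂))

lemma aux_exp (q : ℝ → ℂ) (t : ℂ)
    (h : ∀ x ∈ Set.Icc (0:ℝ) 1, HasDerivAt q (t * q x) x) :
    ∀ x ∈ Set.Icc (0:ℝ) 1, q x = q 0 * Complex.exp (t * x) := by
  have hd : ∀ x ∈ Set.Icc (0:ℝ) 1,
      HasDerivAt (fun y : ℝ => q y * Complex.exp (-(t * y))) 0 x := by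
    intro x hx
    have h1 : HasDerivAt (fun y : ℝ => -(t * (y:ℂ))) (-(t * 1)) x :=
      ((Complex.ofRealCLM.hasDerivAt (x := x)).const_mul t).neg
    refine ((h x hx).mul h1.cexp).congr_deriv ?_
    ring
  have hc := constant_of_has_deriv_right_zero
    (f := fun y : ℝ => q y * Complex.exp (-(t * y))) (a := 0) (b := 1)
    (fun x hx => (hd x hx).continuousAt.continuousWithinAt)
    (fun x hx => (hd x (Set.Ico_subset_Icc_self hx)).hasDerivWithinAt)
  intro x hx
  have := hc x hx
  simp only [Complex.ofReal_zero, mul_zero, neg_zero, Complex.exp_zero, mul_one] at this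
  rw [← this, mul_assoc, ← Complex.exp_add]
  simp

lemma aux_g (u₁ u₂ c₁ c₂ m s t : ℂ) (hu₁ : u₁ ≠ 0) (hu₂ : u₂ ≠ 0)
    (HS : u₁ * u₂ * (s + t) = -((u₂ - u₁) * m + u₂ * c₁ - u₁ * c₂))
    (HP : u₁ * u₂ * (s * t) = -(m ^ 2 + m * (c₁ + c₂)))
    (vh vc vh' vc' : ℝ → ℂ)
    (hdh : ∀ x ∈ Set.Icc (0:ℝ) 1, HasDerivAt vh (vh' x) x)
    (hdc : ∀ x ∈ Set.Icc (0:ℝ) 1, HasDerivAt vc (vc' x) x)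
    (hbc0 : vh 0 = 0)
    (heig : ∀ x ∈ Set.Icc (0:ℝ) 1,
      -u₁ * vh' x - c₁ * (vh x - vc x) = m * vh x ∧
      u₂ * vc' x + c₂ * (vh x - vc x) = m * vc x) :
    ∀ x ∈ Set.Icc (0:ℝ) 1,
      c₁ * vc x - (m + c₁ + u₁ * t) * vh x = c₁ * vc 0 * Complex.exp (s * x) := by
  intro x hx
  have := aux_exp (fun y => c₁ * vc y - (m + c₁ + u₁ * t) * vh y) s ?_ x hx
  · simpa [hbc0] using this
  intro y hy
  refine (((hdc y hy).const_mul c₁).sub ((hdh y hy).const_mul (m + c₁ + u₁ * t))).congr_deriv ?_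
  obtain ⟨h1, h2⟩ := heig y hy
  apply mul_left_cancel₀ (mul_ne_zero hu₁ hu₂)
  linear_combination (u₁ * c₁ * h2 + u₂ * (m + c₁ + u₁ * t) * h1
    - (c₁ * vc y - (m + c₁) * vh y) * HS + u₁ * vh y * HP)

/-- if `λ` is an eigenvalue of the shifted operator `A_s = A + lam0 I`
(witnessed by a nonzero differentiable eigenfunction `v` satisfying the boundary
conditions), then `f(λ) = 0` where
`f(λ) = (u₁/c₁)(θ₁ e^{θ₁} − θ₂ e^{θ₂}) + ((λ − lam0 + c₁)/c₁)(e^{θ₁} − e^{θ₂})`. -/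
theorem eigenvalue_implies_characteristic_eq
    (u₁ u₂ c₁ c₂ lam0 : ℝ) (hu₁ : 0 < u₁) (hu₂ : 0 < u₂) (hc₁ : 0 < c₁) (hc₂ : 0 < c₂)
    (hlam0 : 0 < lam0)
    (lam θ₁ θ₂ : ℂ) (hroots : CharRoots u₁ u₂ c₁ c₂ lam0 lam θ₁ θ₂)
    (vh vc vh' vc' : ℝ → ℂ)
    (hdh : ∀ x ∈ Set.Icc (0:ℝ) 1, HasDerivAt vh (vh' x) x)
    (hdc : ∀ x ∈ Set.Icc (0:ℝ) 1, HasDerivAt vc (vc' x) x)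
    (hbc0 : vh 0 = 0) (hbc1 : vc 1 = 0)
    (heig : ∀ x ∈ Set.Icc (0:ℝ) 1,
      -(u₁ : ℂ) * vh' x - (c₁ : ℂ) * (vh x - vc x) = (lam - (lam0 : ℂ)) * vh x ∧
      (u₂ : ℂ) * vc' x + (c₂ : ℂ) * (vh x - vc x) = (lam - (lam0 : ℂ)) * vc x)
    (hnz : ∃ x ∈ Set.Icc (0:ℝ) 1, vh x ≠ 0 ∨ vc x ≠ 0) :
    ((u₁ : ℂ) / c₁) * (θ₁ * Complex.exp θ₁ - θ₂ * Complex.exp θ₂)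
      + ((lam - (lam0 : ℂ) + c₁) / c₁) * (Complex.exp θ₁ - Complex.exp θ₂) = 0 := by
  have U1 : (u₁ : ℂ) ≠ 0 := by exact_mod_cast hu₁.ne'
  have U2 : (u₂ : ℂ) ≠ 0 := by exact_mod_cast hu₂.ne'
  have C1 : (c₁ : ℂ) ≠ 0 := by exact_mod_cast hc₁.ne'
  obtain ⟨hS, hP⟩ := hroots
  by_cases hne : θ₁ = θ₂
  · subst hne; simp
  have hsub : θ₁ - θ₂ ≠ 0 := sub_ne_zero.mpr hne
  generalize lam - (lam0 : ℂ) = m at *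
  have HS : (u₁ : ℂ) * u₂ * (θ₁ + θ₂) = -((u₂ - u₁) * m + u₂ * c₁ - u₁ * c₂) := by
    rw [hS]; field_simp
  have HP : (u₁ : ℂ) * u₂ * (θ₁ * θ₂) = -(m ^ 2 + m * (c₁ + c₂)) := by
    rw [hP]; field_simp
  have g1 := aux_g u₁ u₂ c₁ c₂ m θ₁ θ₂ U1 U2 HS HP vh vc vh' vc' hdh hdc hbc0 heig
  have g2 := aux_g u₁ u₂ c₁ c₂ m θ₂ θ₁ U1 U2 (by rw [add_comm θ₂]; exact HS)
    (by rw [mul_comm θ₂]; exact HP) vh vc vh' vc' hdh hdc hbc0 heig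
  have hK : vc 0 ≠ 0 := by
    intro h0
    obtain ⟨x, hx, hn⟩ := hnz
    have e1 := g1 x hx
    have e2 := g2 x hx
    rw [h0] at e1 e2
    have hv : vh x = 0 := by
      apply mul_left_cancel₀ (mul_ne_zero U1 hsub)
      linear_combination e1 - e2
    have hw : vc x = 0 := by
      apply mul_left_cancel₀ C1
      rw [hv] at e1
      linear_combination e1
    tauto
  have e1 := g1 1 (by simp)
  have e2 := g2 1 (by simp)
  simp only [hbc1, Complex.ofReal_one, mul_one] at e1 e2
  have key : (u₁ : ℂ) * (θ₁ * Complex.exp θ₁ - θ₂ * Complex.exp θ₂)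
      + (m + c₁) * (Complex.exp θ₁ - Complex.exp θ₂) = 0 := by
    apply mul_left_cancel₀ (mul_ne_zero C1 hK)
    linear_combination -(u₁ * θ₁ + m + c₁) * e1 + (u₁ * θ₂ + m + c₁) * e2
  field_simp
  linear_combination key
end

section
/- Fix λ₀ > 0 and let λ ∈ ℂ satisfy f(λ) = 0. Define v_λ = (v_λ^h, v_λ^c) : [0,1] → ℂ² by v_λ^h(x) = e^{θ₁(λ)x} − e^{θ₂(λ)x} and v_λ^c(x) = (u₁/c₁)(θ₁(λ) e^{θ₁(λ)x} − θ₂(λ) e^{θ₂(λ)x}) + ((λ − λ₀ + c₁)/c₁)(e^{θ₁(λ)x} − e^{θ₂(λ)x}). If v_λ is not identically zero, then v_λ^h(0) = 0, v_λ^c(1) = 0, and v_λ satisfies −u₁ (v_λ^h)' − c₁(v_λ^h − v_λ^c) = (λ − λ₀) v_λ^h and u₂ (v_λ^c)' + c₂(v_λ^h − v_λ^c) = (λ − λ₀) v_λ^c on [0,1]; that is, λ is an eigenvalue of A_s = A + λ₀·I with eigenfunction v_λ. -/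
open Complex

/-- The candidate eigenfunction's first component `v_λ^h(x) = e^{θ₁x} − e^{θ₂x}`. -/
noncomputable def vlamh (θ₁ θ₂ : ℂ) : ℝ → ℂ := fun x =>
  Complex.exp (θ₁ * x) - Complex.exp (θ₂ * x)

/-- The candidate eigenfunction's second component
`v_λ^c(x) = (u₁/c₁)(θ₁ e^{θ₁x} − θ₂ e^{θ₂x}) + ((λ − λ₀ + c₁)/c₁)(e^{θ₁x} − e^{θ₂x})`. -/
noncomputable def vlamc (u₁ c₁ lam0 : ℝ) (lam θ₁ θ₂ : ℂ) : ℝ → ℂ := fun x =>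
  ((u₁ : ℂ) / c₁) * (θ₁ * Complex.exp (θ₁ * x) - θ₂ * Complex.exp (θ₂ * x))
    + ((lam - (lam0 : ℂ) + c₁) / c₁) * (Complex.exp (θ₁ * x) - Complex.exp (θ₂ * x))

/-- if `f(λ) = 0` and the explicit function `v_λ` is not identically zero,
then `v_λ` satisfies the boundary conditions and the eigenvalue equations of
`A_s = A + λ₀ I`; i.e. `λ` is an eigenvalue of `A_s` with eigenfunction `v_λ`. -/
theorem characteristic_eq_implies_eigenvalue
    (u₁ u₂ c₁ c₂ lam0 : ℝ) (hu₁ : 0 < u₁) (hu₂ : 0 < u₂) (hc₁ : 0 < c₁) (hc₂ : 0 < c₂)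
    (hlam0 : 0 < lam0)
    (lam θ₁ θ₂ : ℂ) (hroots : CharRoots u₁ u₂ c₁ c₂ lam0 lam θ₁ θ₂)
    (hf : ((u₁ : ℂ) / c₁) * (θ₁ * Complex.exp θ₁ - θ₂ * Complex.exp θ₂)
      + ((lam - (lam0 : ℂ) + c₁) / c₁) * (Complex.exp θ₁ - Complex.exp θ₂) = 0)
    (hnz : ∃ x ∈ Set.Icc (0:ℝ) 1,
      vlamh θ₁ θ₂ x ≠ 0 ∨ vlamc u₁ c₁ lam0 lam θ₁ θ₂ x ≠ 0) :
    vlamh θ₁ θ₂ 0 = 0 ∧ vlamc u₁ c₁ lam0 lam θ₁ θ₂ 1 = 0 ∧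
    ∀ x ∈ Set.Icc (0:ℝ) 1,
      -(u₁ : ℂ) * deriv (vlamh θ₁ θ₂) x
          - (c₁ : ℂ) * (vlamh θ₁ θ₂ x - vlamc u₁ c₁ lam0 lam θ₁ θ₂ x)
        = (lam - (lam0 : ℂ)) * vlamh θ₁ θ₂ x ∧
      (u₂ : ℂ) * deriv (vlamc u₁ c₁ lam0 lam θ₁ θ₂) x
          + (c₂ : ℂ) * (vlamh θ₁ θ₂ x - vlamc u₁ c₁ lam0 lam θ₁ θ₂ x)
        = (lam - (lam0 : ℂ)) * vlamc u₁ c₁ lam0 lam θ₁ θ₂ x := by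
  have hu₁' : (u₁ : ℂ) ≠ 0 := by exact_mod_cast hu₁.ne'
  have hu₂' : (u₂ : ℂ) ≠ 0 := by exact_mod_cast hu₂.ne'
  have hc₁' : (c₁ : ℂ) ≠ 0 := by exact_mod_cast hc₁.ne'
  obtain ⟨hs, hp⟩ := hroots
  have hs' : (u₁ : ℂ) * u₂ * (θ₁ + θ₂) = -(((u₂ : ℂ) - u₁) * (lam - (lam0 : ℂ)) + (u₂ : ℂ) * c₁ - (u₁ : ℂ) * c₂) := by
    rw [hs]; field_simp
  have hp' : (u₁ : ℂ) * u₂ * (θ₁ * θ₂) = -((lam - (lam0 : ℂ)) ^ 2 + (lam - (lam0 : ℂ)) * ((c₁ : ℂ) + c₂)) := by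
    rw [hp]; field_simp
  have h1 : ((u₂ : ℂ) * θ₁ - c₂ - (lam - lam0)) * (u₁ * θ₁ + (lam - lam0) + c₁) + c₁ * c₂ = 0 := by
    linear_combination θ₁ * hs' - hp'
  have h2 : ((u₂ : ℂ) * θ₂ - c₂ - (lam - lam0)) * (u₁ * θ₂ + (lam - lam0) + c₁) + c₁ * c₂ = 0 := by
    linear_combination θ₂ * hs' - hp'
  have hE : ∀ (θ : ℂ) (x : ℝ), HasDerivAt (fun y : ℝ => Complex.exp (θ * y)) (θ * Complex.exp (θ * x)) x := by
    intro θ x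
    have h := (((hasDerivAt_id (x : ℂ)).const_mul θ).cexp).comp_ofReal
    simpa [mul_comm] using h
  refine ⟨by simp [vlamh], by simpa [vlamc] using hf, fun x _ => ?_⟩
  have d1 : deriv (vlamh θ₁ θ₂) x = _ := ((hE θ₁ x).sub (hE θ₂ x)).deriv
  have d2 : deriv (vlamc u₁ c₁ lam0 lam θ₁ θ₂) x = _ :=
    (((((hE θ₁ x).const_mul θ₁).sub ((hE θ₂ x).const_mul θ₂)).const_mul ((u₁ : ℂ) / c₁)).add
      (((hE θ₁ x).sub (hE θ₂ x)).const_mul ((lam - (lam0 : ℂ) + c₁) / c₁))).deriv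
  rw [d1, d2]
  simp only [vlamh, vlamc]
  generalize Complex.exp (θ₁ * x) = E₁
  generalize Complex.exp (θ₂ * x) = E₂
  constructor
  · field_simp
    ring
  · field_simp
    linear_combination E₁ * h1 - E₂ * h2
end

section
/- Fix λ₀ > 0 and λ ∈ ℂ with θ₁(λ) ≠ θ₂(λ). If a differentiable function v = (v^h, v^c) : [0,1] → ℂ² satisfies v^h(0) = 0, v^c(1) = 0 and the eigenvalue equations −u₁ (v^h)' − c₁(v^h − v^c) = (λ − λ₀) v^h and u₂ (v^c)' + c₂(v^h − v^c) = (λ − λ₀) v^c on [0,1], then there exists ℓ ∈ ℂ such that v = ℓ·v_λ, where v_λ^h(x) = e^{θ₁(λ)x} − e^{θ₂(λ)x} and v_λ^c(x) = (u₁/c₁)(θ₁(λ) e^{θ₁(λ)x} − θ₂(λ) e^{θ₂(λ)x}) + ((λ − λ₀ + c₁)/c₁)(e^{θ₁(λ)x} − e^{θ₂(λ)x}). In particular, each eigenspace of A_s = A + λ₀·I is at most one-dimensional. -/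
open Complex

theorem exp_ode_aux (θ : ℂ) (w : ℝ → ℂ)
    (h : ∀ x ∈ Set.Icc (0:ℝ) 1, HasDerivAt w (θ * w x) x) :
    ∀ x ∈ Set.Icc (0:ℝ) 1, w x = w 0 * Complex.exp (θ * x) := by
  have he : ∀ x : ℝ, HasDerivAt (fun x : ℝ => Complex.exp (-(θ * x)))
      (Complex.exp (-(θ * x)) * (-(θ * 1))) x := fun x =>
    (((Complex.ofRealCLM.hasDerivAt (x := x)).const_mul θ).neg).cexp
  have hd : ∀ x ∈ Set.Icc (0:ℝ) 1,
      HasDerivAt (fun x : ℝ => w x * Complex.exp (-(θ * x))) 0 x := by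
    intro x hx
    have := (h x hx).mul (he x)
    refine HasDerivAt.congr_deriv this ?_
    ring
  intro x hx
  have hc := constant_of_has_deriv_right_zero
    (f := fun x : ℝ => w x * Complex.exp (-(θ * x))) (a := 0) (b := 1)
    (fun x hx => (hd x hx).continuousAt.continuousWithinAt)
    (fun x hx => (hd x ⟨hx.1, hx.2.le⟩).hasDerivWithinAt) x hx
  simp only [Complex.ofReal_zero, mul_zero, neg_zero, Complex.exp_zero, mul_one] at hc
  rw [← hc, mul_assoc, ← Complex.exp_add]
  simp

/-- if `θ₁(λ) ≠ θ₂(λ)` then every solution `v` of the eigenvalue equations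
of `A_s = A + λ₀ I` with boundary conditions `v^h(0) = 0`, `v^c(1) = 0` is a scalar
multiple of the explicit function `v_λ`; in particular each eigenspace of `A_s` is at
most one-dimensional. -/
theorem eigenspace_one_dimensional
    (u₁ u₂ c₁ c₂ lam0 : ℝ) (hu₁ : 0 < u₁) (hu₂ : 0 < u₂) (hc₁ : 0 < c₁) (hc₂ : 0 < c₂)
    (hlam0 : 0 < lam0)
    (lam θ₁ θ₂ : ℂ) (hroots : CharRoots u₁ u₂ c₁ c₂ lam0 lam θ₁ θ₂) (hθ : θ₁ ≠ θ₂)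
    (vh vc vh' vc' : ℝ → ℂ)
    (hdh : ∀ x ∈ Set.Icc (0:ℝ) 1, HasDerivAt vh (vh' x) x)
    (hdc : ∀ x ∈ Set.Icc (0:ℝ) 1, HasDerivAt vc (vc' x) x)
    (hbc0 : vh 0 = 0) (hbc1 : vc 1 = 0)
    (heig : ∀ x ∈ Set.Icc (0:ℝ) 1,
      -(u₁ : ℂ) * vh' x - (c₁ : ℂ) * (vh x - vc x) = (lam - (lam0 : ℂ)) * vh x ∧
      (u₂ : ℂ) * vc' x + (c₂ : ℂ) * (vh x - vc x) = (lam - (lam0 : ℂ)) * vc x) :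
    ∃ ℓ : ℂ, ∀ x ∈ Set.Icc (0:ℝ) 1,
      vh x = ℓ * vlamh θ₁ θ₂ x ∧ vc x = ℓ * vlamc u₁ c₁ lam0 lam θ₁ θ₂ x := by
  obtain ⟨hs, hp⟩ := hroots
  have h1 : (u₁ : ℂ) ≠ 0 := by exact_mod_cast hu₁.ne'
  have h2 : (u₂ : ℂ) ≠ 0 := by exact_mod_cast hu₂.ne'
  have h3 : (c₁ : ℂ) ≠ 0 := by exact_mod_cast hc₁.ne'
  generalize hμ : lam - (lam0 : ℂ) = μ at *
  have key : ∀ θ θ' : ℂ, θ + θ' = -((((u₂ : ℂ) - u₁) * μ + (u₂ : ℂ) * c₁ - (u₁ : ℂ) * c₂)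
      / ((u₁ : ℂ) * u₂)) → θ * θ' = -((μ ^ 2 + μ * ((c₁ : ℂ) + c₂)) / ((u₁ : ℂ) * u₂)) →
      ∀ x ∈ Set.Icc (0:ℝ) 1, (-(μ + c₁) - u₁ * θ') * vh x + c₁ * vc x
        = c₁ * vc 0 * Complex.exp (θ * x) := by
    intro θ θ' hs hp x hx
    have := exp_ode_aux θ (fun x => (-(μ + c₁) - u₁ * θ') * vh x + c₁ * vc x) ?_ x hx
    · simpa [hbc0] using this
    · intro y hy
      have hd := ((hdh y hy).const_mul (-(μ + c₁) - u₁ * θ')).add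
        ((hdc y hy).const_mul (c₁ : ℂ))
      refine HasDerivAt.congr_deriv hd ?_
      obtain ⟨e1, e2⟩ := heig y hy
      have e1' : vh' y = (-(μ + c₁) * vh y + c₁ * vc y) / u₁ := by
        field_simp
        linear_combination -e1
      have e2' : vc' y = ((μ + c₂) * vc y - c₂ * vh y) / u₂ := by
        field_simp
        linear_combination e2
      rw [e1', e2']
      symm
      linear_combination (norm := (field_simp; ring)) (c₁ * vc y - (μ + c₁) * vh y) * hs
        - u₁ * vh y * hp
  have k1 := key θ₁ θ₂ hs hp
  have k2 := key θ₂ θ₁ (by rw [← hs]; ring) (by rw [← hp]; ring)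
  have hθ' : θ₁ - θ₂ ≠ 0 := sub_ne_zero.2 hθ
  refine ⟨c₁ * vc 0 / (u₁ * (θ₁ - θ₂)), fun x hx => ?_⟩
  have a1 := k1 x hx
  have a2 := k2 x hx
  have b1 : vh x = c₁ * vc 0 / (u₁ * (θ₁ - θ₂)) * vlamh θ₁ θ₂ x := by
    unfold vlamh
    field_simp
    linear_combination a1 - a2
  refine ⟨b1, ?_⟩
  unfold vlamc
  rw [hμ]
  have b2 : vc x = (c₁ * vc 0 * Complex.exp (θ₁ * x) + (μ + c₁ + u₁ * θ₂) * vh x) / c₁ := by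
    field_simp
    linear_combination a1
  rw [b2, b1]
  unfold vlamh
  field_simp
  ring
end

section
/- Fix λ₀ > 0 and let λ ∈ ℂ. If a differentiable function v = (v^h, v^c) : [0,1] → ℂ² satisfies v^h(0) = 0, v^c(1) = 0, the eigenvalue equations −u₁ (v^h)' − c₁(v^h − v^c) = (λ − λ₀) v^h and u₂ (v^c)' + c₂(v^h − v^c) = (λ − λ₀) v^c on [0,1], and additionally the observed boundary trace vanishes, v^c(0) = 0, then v is identically zero. (This is the kernel condition Ker(λI − A_s) ∩ Ker(C) = {0} underlying the observability of the projected pair (𝖠, 𝖢), where C v := v^c(0).) -/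
open Complex

/-- if `v` is differentiable, satisfies the boundary conditions
`v^h(0) = 0`, `v^c(1) = 0` and the eigenvalue equations of `A_s = A + λ₀ I`, and in
addition the observed boundary trace vanishes (`v^c(0) = 0`), then `v ≡ 0` on `[0,1]`.
This is the kernel condition `Ker(λI − A_s) ∩ Ker(C) = {0}` underlying observability. -/
theorem kernel_condition_observability
    (u₁ u₂ c₁ c₂ lam0 : ℝ) (hu₁ : 0 < u₁) (hu₂ : 0 < u₂) (hc₁ : 0 < c₁) (hc₂ : 0 < c₂)
    (hlam0 : 0 < lam0) (lam : ℂ)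
    (vh vc vh' vc' : ℝ → ℂ)
    (hdh : ∀ x ∈ Set.Icc (0:ℝ) 1, HasDerivAt vh (vh' x) x)
    (hdc : ∀ x ∈ Set.Icc (0:ℝ) 1, HasDerivAt vc (vc' x) x)
    (hbc0 : vh 0 = 0) (hbc1 : vc 1 = 0)
    (heig : ∀ x ∈ Set.Icc (0:ℝ) 1,
      -(u₁ : ℂ) * vh' x - (c₁ : ℂ) * (vh x - vc x) = (lam - (lam0 : ℂ)) * vh x ∧
      (u₂ : ℂ) * vc' x + (c₂ : ℂ) * (vh x - vc x) = (lam - (lam0 : ℂ)) * vc x)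
    (htrace : vc 0 = 0) :
    ∀ x ∈ Set.Icc (0:ℝ) 1, vh x = 0 ∧ vc x = 0 := by
  have h1 : (u₁ : ℂ) ≠ 0 := by exact_mod_cast hu₁.ne'
  have h2 : (u₂ : ℂ) ≠ 0 := by exact_mod_cast hu₂.ne'
  obtain ⟨a, b, hab⟩ : ∃ a b : ℂ, ∀ x ∈ Set.Icc (0:ℝ) 1, vh' x = a * vh x + b * vc x := by
    refine ⟨-(c₁ + (lam - lam0)) / u₁, c₁ / u₁, fun x hx => ?_⟩
    have h := (heig x hx).1
    field_simp
    linear_combination -h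
  obtain ⟨c, d, hcd⟩ : ∃ c d : ℂ, ∀ x ∈ Set.Icc (0:ℝ) 1, vc' x = c * vh x + d * vc x := by
    refine ⟨-c₂ / u₂, (c₂ + (lam - lam0)) / u₂, fun x hx => ?_⟩
    have h := (heig x hx).2
    field_simp
    linear_combination h
  have key : ∀ x ∈ Set.Icc (0:ℝ) 1, (vh x, vc x) = (0 : ℂ × ℂ) := by
    refine eq_zero_of_abs_deriv_le_mul_abs_self_of_eq_zero_right
      (f := fun x => (vh x, vc x)) (f' := fun x => (vh' x, vc' x))
      (K := ‖a‖ + ‖b‖ + ‖c‖ + ‖d‖) ?_ ?_ ?_ ?_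
    · intro x hx
      exact ((hdh x hx).prodMk (hdc x hx)).continuousAt.continuousWithinAt
    · intro x hx
      have hx := Set.Ico_subset_Icc_self hx
      exact ((hdh x hx).prodMk (hdc x hx)).hasDerivWithinAt
    · simp [hbc0, htrace]
    · intro x hx
      have hx := Set.Ico_subset_Icc_self hx
      have e1 : ‖vh x‖ ≤ ‖(vh x, vc x)‖ := norm_fst_le (vh x, vc x)
      have e2 : ‖vc x‖ ≤ ‖(vh x, vc x)‖ := norm_snd_le (vh x, vc x)
      have aux : ∀ p q : ℂ, ‖p * vh x + q * vc x‖ ≤ (‖p‖ + ‖q‖) * ‖(vh x, vc x)‖ := by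
        intro p q
        calc ‖p * vh x + q * vc x‖ ≤ ‖p‖ * ‖vh x‖ + ‖q‖ * ‖vc x‖ := by
              simpa using norm_add_le (p * vh x) (q * vc x)
          _ ≤ ‖p‖ * ‖(vh x, vc x)‖ + ‖q‖ * ‖(vh x, vc x)‖ := by gcongr
          _ = _ := by ring
      have n0 := norm_nonneg (vh x, vc x)
      have f1 := aux a b
      have f2 := aux c d
      have g1 : 0 ≤ (‖a‖ + ‖b‖) * ‖(vh x, vc x)‖ := by positivity
      have g2 : 0 ≤ (‖c‖ + ‖d‖) * ‖(vh x, vc x)‖ := by positivity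
      rw [← hab x hx] at f1
      rw [← hcd x hx] at f2
      refine norm_prod_le_iff.2 ⟨?_, ?_⟩
      · show ‖vh' x‖ ≤ _
        linarith
      · show ‖vc' x‖ ≤ _
        linarith
  intro x hx
  exact Prod.mk.inj (key x hx)
end

section
/- Every eigenvalue of A lies in the closed left half-plane: if λ ∈ ℂ and there exists a nonzero differentiable v = (v^h, v^c) : [0,1] → ℂ² with v^h(0) = 0 and v^c(1) = 0 satisfying −u₁ (v^h)' − c₁(v^h − v^c) = λ v^h and u₂ (v^c)' + c₂(v^h − v^c) = λ v^c on [0,1], then Re(λ) ≤ 0. -/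
open Complex

/-- every eigenvalue of `A` lies in the closed left half-plane: if a
nonzero differentiable `v = (v^h, v^c)` satisfies `v^h(0) = 0`, `v^c(1) = 0` and
`−u₁ (v^h)' − c₁(v^h − v^c) = λ v^h`, `u₂ (v^c)' + c₂(v^h − v^c) = λ v^c` on `[0,1]`,
then `Re(λ) ≤ 0`. -/
theorem eigenvalues_in_left_half_plane
    (u₁ u₂ c₁ c₂ : ℝ) (hu₁ : 0 < u₁) (hu₂ : 0 < u₂) (hc₁ : 0 < c₁) (hc₂ : 0 < c₂)
    (lam : ℂ)
    (vh vc vh' vc' : ℝ → ℂ)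
    (hdh : ∀ x ∈ Set.Icc (0:ℝ) 1, HasDerivAt vh (vh' x) x)
    (hdc : ∀ x ∈ Set.Icc (0:ℝ) 1, HasDerivAt vc (vc' x) x)
    (hbc0 : vh 0 = 0) (hbc1 : vc 1 = 0)
    (heig : ∀ x ∈ Set.Icc (0:ℝ) 1,
      -(u₁ : ℂ) * vh' x - (c₁ : ℂ) * (vh x - vc x) = lam * vh x ∧
      (u₂ : ℂ) * vc' x + (c₂ : ℂ) * (vh x - vc x) = lam * vc x)
    (hnz : ∃ x ∈ Set.Icc (0:ℝ) 1, vh x ≠ 0 ∨ vc x ≠ 0) :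
    lam.re ≤ 0 := by
  by_contra hlam
  push Not at hlam
  set E : ℝ → ℝ := fun x => c₂ * u₁ * ((vh x).re ^ 2 + (vh x).im ^ 2)
    - c₁ * u₂ * ((vc x).re ^ 2 + (vc x).im ^ 2) with hE
  set E' : ℝ → ℝ := fun x => -2 * (c₁ * c₂ * (((vh x).re - (vc x).re) ^ 2
      + ((vh x).im - (vc x).im) ^ 2)
    + lam.re * (c₂ * ((vh x).re ^ 2 + (vh x).im ^ 2)
      + c₁ * ((vc x).re ^ 2 + (vc x).im ^ 2))) with hE'
  have hD : ∀ x ∈ Set.Icc (0:ℝ) 1, HasDerivAt E (E' x) x := by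
    intro x hx
    have h1 : HasDerivAt (fun y => (vh y).re) (vh' x).re x :=
      Complex.reCLM.hasFDerivAt.comp_hasDerivAt x (hdh x hx)
    have h2 : HasDerivAt (fun y => (vh y).im) (vh' x).im x :=
      Complex.imCLM.hasFDerivAt.comp_hasDerivAt x (hdh x hx)
    have h3 : HasDerivAt (fun y => (vc y).re) (vc' x).re x :=
      Complex.reCLM.hasFDerivAt.comp_hasDerivAt x (hdc x hx)
    have h4 : HasDerivAt (fun y => (vc y).im) (vc' x).im x :=
      Complex.imCLM.hasFDerivAt.comp_hasDerivAt x (hdc x hx)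
    have h := (((h1.pow 2).add (h2.pow 2)).const_mul (c₂ * u₁)).sub
      (((h3.pow 2).add (h4.pow 2)).const_mul (c₁ * u₂))
    obtain ⟨e1, e2⟩ := heig x hx
    have e1r := congrArg Complex.re e1
    have e1i := congrArg Complex.im e1
    have e2r := congrArg Complex.re e2
    have e2i := congrArg Complex.im e2
    simp at e1r e1i e2r e2i
    refine HasDerivAt.congr_deriv h ?_
    simp only [hE']
    norm_num
    linear_combination (-2 * c₂ * (vh x).re) * e1r + (-2 * c₂ * (vh x).im) * e1i
      - (2 * c₁ * (vc x).re) * e2r - (2 * c₁ * (vc x).im) * e2i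
  have hle : ∀ x, E' x ≤ 0 := by
    intro x
    have : 0 ≤ (c₁ * c₂ * (((vh x).re - (vc x).re) ^ 2
      + ((vh x).im - (vc x).im) ^ 2)
      + lam.re * (c₂ * ((vh x).re ^ 2 + (vh x).im ^ 2)
      + c₁ * ((vc x).re ^ 2 + (vc x).im ^ 2))) := by positivity
    simp only [hE']
    linarith
  have hanti : AntitoneOn E (Set.Icc 0 1) := by
    apply antitoneOn_of_hasDerivWithinAt_nonpos (f' := E') (convex_Icc 0 1)
    · exact fun x hx => (hD x hx).continuousAt.continuousWithinAt
    · exact fun x hx => (hD x (interior_subset hx)).hasDerivWithinAt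
    · exact fun x _ => hle x
  have h0 : E 0 ≤ 0 := by
    have : 0 ≤ c₁ * u₂ * ((vc 0).re ^ 2 + (vc 0).im ^ 2) := by positivity
    simp only [hE, hbc0]
    simp
    linarith
  have h1 : 0 ≤ E 1 := by
    have : 0 ≤ c₂ * u₁ * ((vh 1).re ^ 2 + (vh 1).im ^ 2) := by positivity
    simp only [hE, hbc1]
    simp
    linarith
  have hz : ∀ x ∈ Set.Icc (0:ℝ) 1, E x = 0 := by
    intro x hx
    have a := hanti (Set.left_mem_Icc.2 zero_le_one) hx hx.1
    have b := hanti hx (Set.right_mem_Icc.2 zero_le_one) hx.2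
    linarith
  obtain ⟨x, hx, hne⟩ := hnz
  have hd0 : HasDerivWithinAt E 0 (Set.Icc 0 1) x :=
    (hasDerivWithinAt_const x (Set.Icc (0:ℝ) 1) (0:ℝ)).congr hz (hz x hx)
  have hEx : E' x = 0 :=
    (uniqueDiffOn_Icc zero_lt_one x hx).eq_deriv _ (hD x hx).hasDerivWithinAt hd0
  have p1 : 0 ≤ c₁ * c₂ * (((vh x).re - (vc x).re) ^ 2 + ((vh x).im - (vc x).im) ^ 2) := by
    positivity
  have key : ∀ z : ℂ, z ≠ 0 → 0 < z.re ^ 2 + z.im ^ 2 := by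
    intro z hz
    have := Complex.normSq_pos.2 hz
    rw [Complex.normSq_apply] at this
    linarith
  have p2 : 0 < c₂ * ((vh x).re ^ 2 + (vh x).im ^ 2)
      + c₁ * ((vc x).re ^ 2 + (vc x).im ^ 2) := by
    rcases hne with h | h
    · have := key _ h
      positivity
    · have := key _ h
      positivity
  have p3 := mul_pos hlam p2
  simp only [hE'] at hEx
  linarith
end

section
/- In any bounded region of the complex plane, A admits only finitely many eigenvalues: for every R > 0, the set of λ ∈ ℂ with |λ| ≤ R for which there exists a nonzero differentiable v = (v^h, v^c) : [0,1] → ℂ² with v^h(0) = 0 and v^c(1) = 0 satisfying −u₁ (v^h)' − c₁(v^h − v^c) = λ v^h and u₂ (v^c)' + c₂(v^h − v^c) = λ v^c on [0,1], is finite. -/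
open Complex

noncomputable def opL (a b c d : ℂ) : (ℂ × ℂ) →L[ℂ] (ℂ × ℂ) :=
  (a • ContinuousLinearMap.fst ℂ ℂ ℂ + b • ContinuousLinearMap.snd ℂ ℂ ℂ).prod
    (c • ContinuousLinearMap.fst ℂ ℂ ℂ + d • ContinuousLinearMap.snd ℂ ℂ ℂ)

lemma opL_apply (a b c d : ℂ) (v : ℂ × ℂ) :
    opL a b c d v = (a * v.1 + b * v.2, c * v.1 + d * v.2) := by
  simp [opL]

lemma hasDerivAt_expL (L : (ℂ × ℂ) →L[ℂ] (ℂ × ℂ)) (x : ℝ) :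
    HasDerivAt (fun t : ℝ => NormedSpace.exp (t • L)) (L * NormedSpace.exp (x • L)) x :=
  hasDerivAt_exp_smul_const' (𝕂 := ℝ) L x

lemma hasDerivAt_expL' (L : (ℂ × ℂ) →L[ℂ] (ℂ × ℂ)) (x : ℝ) :
    HasDerivAt (fun t : ℝ => NormedSpace.exp (t • L)) (NormedSpace.exp (x • L) * L) x :=
  hasDerivAt_exp_smul_const (𝕂 := ℝ) L x

lemma hasDerivAt_clm_apply {A : ℝ → (ℂ × ℂ) →L[ℂ] (ℂ × ℂ)} {A' : (ℂ × ℂ) →L[ℂ] (ℂ × ℂ)}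
    {v : ℝ → ℂ × ℂ} {v' : ℂ × ℂ} {x : ℝ} (hA : HasDerivAt A A' x) (hv : HasDerivAt v v' x) :
    HasDerivAt (fun t => A t (v t)) (A' (v x) + A x v') x := by
  have hA2 : HasDerivAt (fun t => (A t).restrictScalars ℝ) (A'.restrictScalars ℝ) x :=
    ((ContinuousLinearMap.restrictScalarsL ℂ (ℂ × ℂ) (ℂ × ℂ) ℝ ℝ).hasFDerivAt.comp_hasDerivAt x hA)
  exact hA2.clm_apply hv

lemma exp_zero_smul (L : (ℂ × ℂ) →L[ℂ] (ℂ × ℂ)) (w : ℂ × ℂ) :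
    NormedSpace.exp ((0:ℝ) • L) w = w := by
  have h : (0:ℝ) • L = 0 := zero_smul ℝ L
  rw [h, NormedSpace.exp_zero]
  rfl

lemma sol_eq (L : (ℂ × ℂ) →L[ℂ] (ℂ × ℂ)) (v : ℝ → ℂ × ℂ)
    (hv : ∀ x ∈ Set.Icc (0:ℝ) 1, HasDerivAt v (L (v x)) x) :
    ∀ x ∈ Set.Icc (0:ℝ) 1, v x = NormedSpace.exp (x • L) (v 0) := by
  have hd : ∀ x ∈ Set.Icc (0:ℝ) 1,
      HasDerivAt (fun t : ℝ => NormedSpace.exp (t • (-L)) (v t)) 0 x := by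
    intro x hx
    have := hasDerivAt_clm_apply (hasDerivAt_expL' (-L) x) (hv x hx)
    simpa using this
  intro x hx
  have hc := constant_of_has_deriv_right_zero (a := (0:ℝ)) (b := 1)
    (f := fun t : ℝ => NormedSpace.exp (t • (-L)) (v t))
    (fun x hx => (hd x hx).continuousAt.continuousWithinAt)
    (fun x hx => (hd x ⟨hx.1, hx.2.le⟩).hasDerivWithinAt) x hx
  rw [exp_zero_smul] at hc
  letI : NormedAlgebra ℚ ((ℂ × ℂ) →L[ℂ] (ℂ × ℂ)) := NormedAlgebra.restrictScalars ℚ ℂ _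
  have hn : x • (-L) = -(x • L) := smul_neg x L
  have hm : NormedSpace.exp (x • L) * NormedSpace.exp (-(x • L)) = 1 := by
    rw [← NormedSpace.exp_add_of_commute (Commute.refl (x • L)).neg_right, add_neg_cancel,
      NormedSpace.exp_zero]
  rw [hn] at hc
  rw [← hc]
  exact (congrArg (fun T : (ℂ × ℂ) →L[ℂ] (ℂ × ℂ) => T (v x)) hm).symm

noncomputable def charF (u₁ u₂ c₁ c₂ : ℝ) (lam : ℂ) : ℂ :=
  (NormedSpace.exp (opL (-(lam + c₁) / u₁) (c₁ / u₁) (-c₂ / u₂) ((lam + c₂) / u₂)) (0, 1)).2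

lemma charF_diff (u₁ u₂ c₁ c₂ : ℝ) : Differentiable ℂ (charF u₁ u₂ c₁ c₂) := by
  have h1 : Differentiable ℂ (fun lam : ℂ =>
      opL (-(lam + c₁) / u₁) (c₁ / u₁) (-c₂ / u₂) ((lam + c₂) / u₂)) := by
    have : (fun lam : ℂ => opL (-(lam + c₁) / u₁) (c₁ / u₁) (-c₂ / u₂) ((lam + c₂) / u₂)) =
      fun lam : ℂ => opL (-c₁ / u₁) (c₁ / u₁) (-c₂ / u₂) (c₂ / u₂) +
        lam • opL (-1 / u₁) 0 0 (1 / u₂) := by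
      funext lam
      refine ContinuousLinearMap.ext fun v => ?_
      simp only [ContinuousLinearMap.add_apply, ContinuousLinearMap.smul_apply, opL_apply]
      ext <;> simp <;> ring
    rw [this]
    fun_prop
  have h2 : Differentiable ℂ (fun A : (ℂ × ℂ) →L[ℂ] (ℂ × ℂ) => NormedSpace.exp A) :=
    fun A => (NormedSpace.exp_analytic (𝕂 := ℂ) A).differentiableAt
  have h3 := h2.comp h1
  have h4 : Differentiable ℂ (fun lam : ℂ => NormedSpace.exp
    (opL (-(lam + c₁) / u₁) (c₁ / u₁) (-c₂ / u₂) ((lam + c₂) / u₂)) ((0:ℂ), (1:ℂ))) :=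
    h3.clm_apply (differentiable_const _)
  exact h4.snd

lemma charF_zero (u₁ u₂ c₁ c₂ : ℝ) (hu₁ : 0 < u₁) (hu₂ : 0 < u₂) (hc₁ : 0 < c₁) (hc₂ : 0 < c₂) :
    charF u₁ u₂ c₁ c₂ 0 ≠ 0 := by
  intro h0
  set L := opL (-((0:ℂ) + c₁) / u₁) (c₁ / u₁) (-c₂ / u₂) (((0:ℂ) + c₂) / u₂) with hL
  set v : ℝ → ℂ × ℂ := fun t => NormedSpace.exp (t • L) (0, 1) with hvdef
  have hv : ∀ x, HasDerivAt v (L (v x)) x := by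
    intro x
    have := hasDerivAt_clm_apply (hasDerivAt_expL L x) (hasDerivAt_const x ((0:ℂ), (1:ℂ)))
    simpa using this
  obtain ⟨b, hb⟩ : ∃ b, b = c₁ / u₁ := ⟨_, rfl⟩
  obtain ⟨e, he⟩ : ∃ e, e = c₂ / u₂ := ⟨_, rfl⟩
  have hb0 : 0 < b := hb ▸ div_pos hc₁ hu₁
  have he0 : 0 < e := he ▸ div_pos hc₂ hu₂
  have hLv : ∀ w : ℂ × ℂ, L w = ((b : ℂ) * (w.2 - w.1), (e : ℂ) * (w.2 - w.1)) := by
    intro w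
    rw [hL, opL_apply, hb, he]
    ext <;> push_cast <;> ring
  have hp : ∀ x, HasDerivAt (fun t => (v t).1.re) (b * ((v x).2.re - (v x).1.re)) x := by
    intro x
    have h1 := (ContinuousLinearMap.fst ℝ ℂ ℂ).hasFDerivAt.comp_hasDerivAt x (hv x)
    have h2 := Complex.reCLM.hasFDerivAt.comp_hasDerivAt x h1
    rw [hLv] at h2
    simpa [Function.comp_def] using h2
  have hq : ∀ x, HasDerivAt (fun t => (v t).2.re) (e * ((v x).2.re - (v x).1.re)) x := by
    intro x
    have h1 := (ContinuousLinearMap.snd ℝ ℂ ℂ).hasFDerivAt.comp_hasDerivAt x (hv x)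
    have h2 := Complex.reCLM.hasFDerivAt.comp_hasDerivAt x h1
    rw [hLv] at h2
    simpa [Function.comp_def] using h2
  have hQ : ∀ x, HasDerivAt (fun t => e * (v t).1.re ^ 2 - b * (v t).2.re ^ 2)
      (-(2 * b * e * ((v x).2.re - (v x).1.re) ^ 2)) x := by
    intro x
    refine ((((hp x).pow 2).const_mul e).sub (((hq x).pow 2).const_mul b)).congr_deriv ?_
    push_cast
    ring
  have hanti : Antitone (fun t => e * (v t).1.re ^ 2 - b * (v t).2.re ^ 2) := by
    apply antitone_of_deriv_nonpos (fun x => (hQ x).differentiableAt)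
    intro x
    rw [(hQ x).deriv]
    have : 0 ≤ 2 * b * e * ((v x).2.re - (v x).1.re) ^ 2 := by positivity
    linarith
  have h01 := hanti (zero_le_one (α := ℝ))
  have hv0 : v 0 = (0, 1) := exp_zero_smul L _
  have hv1 : (v 1).2 = 0 := by
    have : (v 1).2 = charF u₁ u₂ c₁ c₂ 0 := by simp only [hvdef, one_smul]; rfl
    rw [this, h0]
  simp only [hv0, hv1] at h01
  norm_num at h01
  have : 0 ≤ e * (v 1).1.re ^ 2 := by positivity
  linarith

/-- in any bounded region of the complex plane, `A` admits only finitely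
many eigenvalues: for every `R > 0`, the set of `λ` with `|λ| ≤ R` admitting a nonzero
differentiable eigenfunction `v` with `v^h(0) = 0`, `v^c(1) = 0` is finite. -/
theorem finitely_many_eigenvalues_in_bounded_regions
    (u₁ u₂ c₁ c₂ : ℝ) (hu₁ : 0 < u₁) (hu₂ : 0 < u₂) (hc₁ : 0 < c₁) (hc₂ : 0 < c₂)
    (R : ℝ) (hR : 0 < R) :
    Set.Finite {lam : ℂ | ‖lam‖ ≤ R ∧
      ∃ vh vc vh' vc' : ℝ → ℂ,
        (∀ x ∈ Set.Icc (0:ℝ) 1, HasDerivAt vh (vh' x) x) ∧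
        (∀ x ∈ Set.Icc (0:ℝ) 1, HasDerivAt vc (vc' x) x) ∧
        vh 0 = 0 ∧ vc 1 = 0 ∧
        (∀ x ∈ Set.Icc (0:ℝ) 1,
          -(u₁ : ℂ) * vh' x - (c₁ : ℂ) * (vh x - vc x) = lam * vh x ∧
          (u₂ : ℂ) * vc' x + (c₂ : ℂ) * (vh x - vc x) = lam * vc x) ∧
        (∃ x ∈ Set.Icc (0:ℝ) 1, vh x ≠ 0 ∨ vc x ≠ 0)} := by
  by_contra hinf
  have hana : AnalyticOnNhd ℂ (charF u₁ u₂ c₁ c₂) Set.univ :=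
    fun z _ => (charF_diff u₁ u₂ c₁ c₂).analyticAt z
  obtain ⟨z, -, hz⟩ := Set.Infinite.exists_accPt_of_subset_isCompact hinf
    (isCompact_closedBall (0:ℂ) R) (fun lam h => by simpa using h.1)
  rw [accPt_iff_frequently_nhdsNE] at hz
  have hfr : ∃ᶠ y in nhdsWithin z {z}ᶜ, charF u₁ u₂ c₁ c₂ y = (fun _ => (0:ℂ)) y := by
    refine hz.mono ?_
    rintro lam ⟨-, vh, vc, vh', vc', hvh, hvc, h0, h1, heq, x, hx, hne⟩
    set L := opL (-(lam + c₁) / u₁) (c₁ / u₁) (-c₂ / u₂) ((lam + c₂) / u₂) with hL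
    have hu₁' : (u₁ : ℂ) ≠ 0 := by exact_mod_cast hu₁.ne'
    have hu₂' : (u₂ : ℂ) ≠ 0 := by exact_mod_cast hu₂.ne'
    have hs := sol_eq L (fun t => (vh t, vc t)) (by
      intro x hx
      refine ((hvh x hx).prodMk (hvc x hx)).congr_deriv ?_
      obtain ⟨e1, e2⟩ := heq x hx
      rw [hL, opL_apply]
      ext
      · simp only
        field_simp
        linear_combination -e1
      · simp only
        field_simp
        linear_combination e2)
    have hv0 : ((vh 0, vc 0) : ℂ × ℂ) = vc 0 • ((0:ℂ), (1:ℂ)) := by simp [h0]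
    simp only [hv0, map_smul] at hs
    have hc0 : vc 0 ≠ 0 := by
      intro h
      have := hs x hx
      simp [h] at this
      tauto
    have h := congrArg Prod.snd (hs 1 (by simp))
    simp only [h1, one_smul, Prod.smul_snd, smul_eq_mul] at h
    exact (mul_eq_zero.mp h.symm).resolve_left hc0
  have hEq := hana.eq_of_frequently_eq (g := fun _ => (0:ℂ)) (fun z _ => analyticAt_const) hfr
  exact charF_zero u₁ u₂ c₁ c₂ hu₁ hu₂ hc₁ hc₂ (congrFun hEq 0)
end

section
/- Fix λ₀ > 0. Let ξ = (ξ^h, ξ^c) : [0,1] × [0,∞) → ℂ² be continuously differentiable and satisfy the shifted error system ∂_t ξ^h = −u₁ ∂_x ξ^h − c₁(ξ^h − ξ^c) + λ₀ ξ^h and ∂_t ξ^c = u₂ ∂_x ξ^c + c₂(ξ^h − ξ^c) + λ₀ ξ^c for all (x,t) ∈ (0,1) × (0,∞), together with the boundary conditions ξ^h(0,t) = 0 and ξ^c(1,t) = 0 for all t ≥ 0. Then for every t > 0, (d/dt) ∫₀¹ (|ξ^h(x,t)|² + |ξ^c(x,t)|²) dx ≤ (2|M|₂ + 2λ₀) ∫₀¹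 (|ξ^h(x,t)|² + |ξ^c(x,t)|²) dx − u₂ |ξ^c(0,t)|², where |M|₂ is the spectral norm of M = [[−c₁, c₁], [c₂, −c₂]]. (The paper states this differential inequality, up to the shift coefficient, as inequality (276) in the proof of Theorem 2.) -/
open MeasureTheory intervalIntegral Set

theorem quad_le_specNormM (c₁ c₂ a b : ℝ) :
    a * (-c₁ * a + c₁ * b) + b * (c₂ * a - c₂ * b) ≤ specNormM c₁ c₂ * (a ^ 2 + b ^ 2) := by
  set T := Matrix.toEuclideanCLM (𝕜 := ℝ) !![-c₁, c₁; c₂, -c₂] with hT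
  set v : EuclideanSpace ℝ (Fin 2) := WithLp.toLp 2 ![a, b] with hv
  have h1 : inner ℝ v (T v) ≤ ‖v‖ * ‖T v‖ := real_inner_le_norm _ _
  have h2 : ‖T v‖ ≤ ‖T‖ * ‖v‖ := T.le_opNorm v
  have h3 : ‖v‖ ^ 2 = a ^ 2 + b ^ 2 := by
    rw [EuclideanSpace.norm_sq_eq]; simp [hv, Fin.sum_univ_two]
  have h4 : inner ℝ v (T v) = a * (-c₁ * a + c₁ * b) + b * (c₂ * a - c₂ * b) := by
    rw [hT, hv, Matrix.toEuclideanCLM_toLp]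
    simp [PiLp.inner_apply, Fin.sum_univ_two]
    ring
  have h5 : specNormM c₁ c₂ = ‖T‖ := rfl
  rw [← h4, h5, ← h3]
  nlinarith [norm_nonneg v, mul_le_mul_of_nonneg_left h2 (norm_nonneg v)]

theorem pointwise_le (u₁ u₂ c₁ c₂ l : ℝ) (h c hx cx ht ct : ℂ)
    (e1 : ht = -(u₁ : ℂ) * hx - (c₁ : ℂ) * (h - c) + (l : ℂ) * h)
    (e2 : ct = (u₂ : ℂ) * cx + (c₂ : ℂ) * (h - c) + (l : ℂ) * c) :
    2 * inner ℝ h ht + 2 * inner ℝ c ct ≤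
      (-u₁ * (2 * inner ℝ h hx) + u₂ * (2 * inner ℝ c cx))
        + (2 * specNormM c₁ c₂ + 2 * l) * (‖h‖ ^ 2 + ‖c‖ ^ 2) := by
  have q1 := quad_le_specNormM c₁ c₂ h.re c.re
  have q2 := quad_le_specNormM c₁ c₂ h.im c.im
  subst e1 e2
  simp only [Complex.sq_norm, Complex.normSq_apply, Complex.inner, Complex.mul_re, Complex.conj_re,
    Complex.conj_im, Complex.add_re, Complex.sub_re, Complex.add_im, Complex.sub_im,
    Complex.mul_im, Complex.neg_re, Complex.neg_im, Complex.ofReal_re, Complex.ofReal_im]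
  nlinarith [q1, q2]

/-- along any `C¹` solution `ξ` of the shifted error system with
boundary conditions `ξ^h(0,t) = 0`, `ξ^c(1,t) = 0`, the `L²` energy satisfies, for
every `t > 0`,
`(d/dt) ∫₀¹ |ξ(x,t)|² dx ≤ (2|M|₂ + 2λ₀) ∫₀¹ |ξ(x,t)|² dx − u₂ |ξ^c(0,t)|²`. -/
theorem shifted_energy_differential_inequality
    (u₁ u₂ c₁ c₂ lam0 : ℝ) (hu₁ : 0 < u₁) (hu₂ : 0 < u₂) (hc₁ : 0 < c₁) (hc₂ : 0 < c₂)
    (hlam0 : 0 < lam0)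
    (ξh ξc ξhx ξht ξcx ξct : ℝ → ℝ → ℂ)
    -- `ξ` is continuously differentiable on `[0,1] × [0,∞)` with partial derivatives
    -- `ξhx, ξht, ξcx, ξct`:
    (hch : ContinuousOn (fun p : ℝ × ℝ => ξh p.1 p.2) (Icc 0 1 ×ˢ Ici 0))
    (hcc : ContinuousOn (fun p : ℝ × ℝ => ξc p.1 p.2) (Icc 0 1 ×ˢ Ici 0))
    (hchx : ContinuousOn (fun p : ℝ × ℝ => ξhx p.1 p.2) (Icc 0 1 ×ˢ Ici 0))
    (hcht : ContinuousOn (fun p : ℝ × ℝ => ξht p.1 p.2) (Icc 0 1 ×ˢ Ici 0))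
    (hccx : ContinuousOn (fun p : ℝ × ℝ => ξcx p.1 p.2) (Icc 0 1 ×ˢ Ici 0))
    (hcct : ContinuousOn (fun p : ℝ × ℝ => ξct p.1 p.2) (Icc 0 1 ×ˢ Ici 0))
    (hdhx : ∀ t ∈ Ici (0:ℝ), ∀ x ∈ Icc (0:ℝ) 1,
      HasDerivWithinAt (fun s => ξh s t) (ξhx x t) (Icc 0 1) x)
    (hdht : ∀ x ∈ Icc (0:ℝ) 1, ∀ t ∈ Ici (0:ℝ),
      HasDerivWithinAt (fun s => ξh x s) (ξht x t) (Ici 0) t)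
    (hdcx : ∀ t ∈ Ici (0:ℝ), ∀ x ∈ Icc (0:ℝ) 1,
      HasDerivWithinAt (fun s => ξc s t) (ξcx x t) (Icc 0 1) x)
    (hdct : ∀ x ∈ Icc (0:ℝ) 1, ∀ t ∈ Ici (0:ℝ),
      HasDerivWithinAt (fun s => ξc x s) (ξct x t) (Ici 0) t)
    -- the shifted error PDE on `(0,1) × (0,∞)`:
    (hpde : ∀ x ∈ Ioo (0:ℝ) 1, ∀ t ∈ Ioi (0:ℝ),
      ξht x t = -(u₁ : ℂ) * ξhx x t - (c₁ : ℂ) * (ξh x t - ξc x t) + (lam0 : ℂ) * ξh x t ∧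
      ξct x t = (u₂ : ℂ) * ξcx x t + (c₂ : ℂ) * (ξh x t - ξc x t) + (lam0 : ℂ) * ξc x t)
    -- boundary conditions:
    (hbc : ∀ t : ℝ, 0 ≤ t → ξh 0 t = 0 ∧ ξc 1 t = 0) :
    ∀ t : ℝ, 0 < t →
      ∃ d : ℝ,
        HasDerivAt (fun s => ∫ x in (0:ℝ)..1, (‖ξh x s‖ ^ 2 + ‖ξc x s‖ ^ 2)) d t ∧
        d ≤ (2 * specNormM c₁ c₂ + 2 * lam0)
              * (∫ x in (0:ℝ)..1, (‖ξh x t‖ ^ 2 + ‖ξc x t‖ ^ 2))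
            - u₂ * ‖ξc 0 t‖ ^ 2 := by
  intro t ht
  have hin : ∀ s : ℝ, 0 ≤ s → ContinuousOn (fun x : ℝ => (x, s)) (Icc 0 1) := fun s _ => by fun_prop
  have hmp : ∀ s : ℝ, 0 ≤ s → MapsTo (fun x : ℝ => (x, s)) (Icc 0 1) (Icc 0 1 ×ˢ Ici (0:ℝ)) :=
    fun s hs x hx => ⟨hx, hs⟩
  have sl : ∀ {f : ℝ × ℝ → ℝ}, ContinuousOn f (Icc 0 1 ×ˢ Ici 0) → ∀ s : ℝ, 0 ≤ s →
      ContinuousOn (fun x => f (x, s)) (Icc 0 1) :=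
    fun hf s hs => hf.comp (hin s hs) (hmp s hs)
  have hE : ContinuousOn (fun p : ℝ × ℝ => ‖ξh p.1 p.2‖ ^ 2 + ‖ξc p.1 p.2‖ ^ 2)
      (Icc 0 1 ×ˢ Ici 0) := (hch.norm.pow 2).add (hcc.norm.pow 2)
  have hF' : ContinuousOn (fun p : ℝ × ℝ => 2 * inner ℝ (ξh p.1 p.2) (ξht p.1 p.2)
      + 2 * inner ℝ (ξc p.1 p.2) (ξct p.1 p.2)) (Icc 0 1 ×ˢ Ici 0) :=
    ((ContinuousOn.inner (𝕜 := ℝ) hch hcht).const_mul 2).add ((ContinuousOn.inner (𝕜 := ℝ) hcc hcct).const_mul 2)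
  have hG' : ContinuousOn (fun p : ℝ × ℝ => -u₁ * (2 * inner ℝ (ξh p.1 p.2) (ξhx p.1 p.2))
      + u₂ * (2 * inner ℝ (ξc p.1 p.2) (ξcx p.1 p.2))) (Icc 0 1 ×ˢ Ici 0) :=
    (((ContinuousOn.inner (𝕜 := ℝ) hch hchx).const_mul 2).const_mul _).add
      (((ContinuousOn.inner (𝕜 := ℝ) hcc hccx).const_mul 2).const_mul _)
  have hG : ContinuousOn (fun p : ℝ × ℝ => -u₁ * ‖ξh p.1 p.2‖ ^ 2 + u₂ * ‖ξc p.1 p.2‖ ^ 2)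
      (Icc 0 1 ×ˢ Ici 0) := ((hch.norm.pow 2).const_mul _).add ((hcc.norm.pow 2).const_mul _)
  have h01 : (0:ℝ) ≤ 1 := zero_le_one
  have ii : ∀ {g : ℝ → ℝ}, ContinuousOn g (Icc 0 1) → IntervalIntegrable g volume 0 1 :=
    fun hg => hg.intervalIntegrable_of_Icc h01
  have hK : IsCompact (Icc (0:ℝ) 1 ×ˢ Icc (t / 2) (2 * t)) := isCompact_Icc.prod isCompact_Icc
  obtain ⟨C, hC⟩ := hK.exists_bound_of_continuousOn
    (hF'.mono (prod_mono le_rfl (fun s hs => by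
      simp only [mem_Icc] at hs; simp only [mem_Ici]; linarith [hs.1])))
  have key := intervalIntegral.hasDerivAt_integral_of_dominated_loc_of_deriv_le (μ := volume)
    (a := 0) (b := 1) (x₀ := t) (s := Ioo (t / 2) (2 * t)) (bound := fun _ => C)
    (F := fun s x => ‖ξh x s‖ ^ 2 + ‖ξc x s‖ ^ 2)
    (F' := fun s x => 2 * inner ℝ (ξh x s) (ξht x s) + 2 * inner ℝ (ξc x s) (ξct x s))
    (Ioo_mem_nhds (by linarith) (by linarith))
    (by
      filter_upwards [Ioi_mem_nhds ht] with s hs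
      have := (ii (sl hE s (le_of_lt hs))).def'
      exact this.aestronglyMeasurable)
    (ii (sl hE t ht.le))
    (ii (sl hF' t ht.le)).def'.aestronglyMeasurable
    (by
      refine Filter.Eventually.of_forall fun x hx s hs => ?_
      rw [uIoc_of_le h01] at hx
      exact hC (x, s) ⟨Ioc_subset_Icc_self hx, Ioo_subset_Icc_self hs⟩)
    intervalIntegrable_const
    (by
      refine Filter.Eventually.of_forall fun x hx s hs => ?_
      rw [uIoc_of_le h01] at hx
      have hs0 : 0 < s := by have := hs.1; linarith
      have hx' := Ioc_subset_Icc_self hx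
      exact ((hdht x hx' s hs0.le).hasDerivAt (Ici_mem_nhds hs0)).norm_sq.add
        ((hdct x hx' s hs0.le).hasDerivAt (Ici_mem_nhds hs0)).norm_sq)
  refine ⟨_, key.2, ?_⟩
  have ftc := integral_eq_sub_of_hasDerivAt_of_le h01 (sl hG t ht.le)
    (f' := fun x => -u₁ * (2 * inner ℝ (ξh x t) (ξhx x t))
      + u₂ * (2 * inner ℝ (ξc x t) (ξcx x t)))
    (fun x hx => by
      have hx' := Ioo_subset_Icc_self hx
      have hn := Icc_mem_nhds hx.1 hx.2
      exact (((hdhx t ht.le x hx').hasDerivAt hn).norm_sq.const_mul _).add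
        (((hdcx t ht.le x hx').hasDerivAt hn).norm_sq.const_mul _))
    (ii (sl hG' t ht.le))
  have iE := (ii (sl hE t ht.le)).const_mul (2 * specNormM c₁ c₂ + 2 * lam0)
  have iG := ii (sl hG' t ht.le)
  have mono := integral_mono_on_of_le_Ioo h01 key.1 (iG.add iE)
    (fun x hx => pointwise_le u₁ u₂ c₁ c₂ lam0 _ _ _ _ _ _ (hpde x hx t ht).1 (hpde x hx t ht).2)
  refine mono.trans ?_
  have e := intervalIntegral.integral_add iG iE
  rw [intervalIntegral.integral_const_mul] at e
  refine e.le.trans ?_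
  obtain ⟨b0, b1⟩ := hbc t ht.le
  simp only [b0, b1, norm_zero] at ftc
  simp only [ftc]
  nlinarith [mul_nonneg hu₁.le (sq_nonneg ‖ξh 1 t‖)]
end
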